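/- arXiv:1707.09793 — 4 statements merged into one kernel-verified Lean document; each statement's English description precedes it below -/
import Mathlib

section
/- Let M be a finitely generated inverse monoid. Then M is finite if and only if M is permutable and every finitely generated subgroup of M is periodic. -/
/-- A semigroup/monoid `M` is `n`-permutable: for every sequence of `n` elements there is a
non-identity permutation `σ` of `{1,…,n}` leaving the product unchanged. -/
def NPermutable (M : Type) [Monoid M] (n : ℕ) : Prop :=
  ∀ s : Fin n → M, ∃ σ : Equiv.Perm (Fin n), σ ≠ 1 ∧
    (List.ofFn s).prod = (List.ofFn fun i => s (σ i)).prod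

/-- `M` is permutable if it is `n`-permutable for some `n ≥ 2`. -/
def Permutable (M : Type) [Monoid M] : Prop :=
  ∃ n : ℕ, 2 ≤ n ∧ NPermutable M n

/-- `M` is an inverse monoid: every element has a unique inverse in the sense of
inverse semigroup theory. -/
def IsInverseMonoid (M : Type) [Monoid M] : Prop :=
  ∀ m : M, ∃! m' : M, m * m' * m = m ∧ m' * m * m' = m'

/-- A subsemigroup `S` of a monoid `M` is a subgroup of `M` if it is a group under the
induced operation (its identity need not be the identity of `M`). -/
def IsSubgroupOfMonoid {M : Type} [Monoid M] (S : Subsemigroup M) : Prop :=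
  ∃ e ∈ S, (∀ x ∈ S, e * x = x ∧ x * e = x) ∧ ∀ x ∈ S, ∃ y ∈ S, x * y = e ∧ y * x = e

/-- A subsemigroup is finitely generated if it is the closure of a finite subset. -/
def SubsemigroupFG {M : Type} [Monoid M] (S : Subsemigroup M) : Prop :=
  ∃ T : Finset M, Subsemigroup.closure (T : Set M) = S

/-- An element `s` is periodic if `s^i = s^j` for some `1 ≤ i < j`. -/
def IsPeriodicElem {M : Type} [Monoid M] (s : M) : Prop :=
  ∃ i j : ℕ, 1 ≤ i ∧ i < j ∧ s ^ i = s ^ j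

namespace PermInv

/-! ### Inverse monoid part -/

section Inverse

variable {M : Type} [Monoid M]

theorem idem_mul (h : IsInverseMonoid M) {e f : M} (he : e * e = e) (hf : f * f = f) :
    (e * f) * (e * f) = e * f := by
  obtain ⟨z, ⟨h1, h2⟩, hu⟩ := h (e * f)
  have h3 : f * z * e = z := by
    apply hu
    constructor
    · calc e * f * (f * z * e) * (e * f) = e * (f * f) * z * (e * e) * f := by
            simp only [mul_assoc]
        _ = e * f * z * (e * f) := by rw [he, hf]; simp only [mul_assoc]
        _ = e * f := h1
    · calc f * z * e * (e * f) * (f * z * e) = f * (z * ((e * e) * (f * f)) * z) * e := by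
            simp only [mul_assoc]
        _ = f * z * e := by rw [he, hf, h2]
  have hz : z * z = z := by
    calc z * z = (f * z * e) * (f * z * e) := by rw [h3]
      _ = f * (z * (e * f) * z) * e := by simp only [mul_assoc]
      _ = z := by rw [h2, h3]
  have h4 : e * f = z := by
    obtain ⟨y, _, hy⟩ := h z
    rw [hy (e * f) ⟨h2, h1⟩, ← hy z ⟨by rw [hz, hz], by rw [hz, hz]⟩]
  rw [h4, hz]

theorem idem_comm (h : IsInverseMonoid M) {e f : M} (he : e * e = e) (hf : f * f = f) :
    e * f = f * e := by
  have h1 := idem_mul h he hf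
  have h2 := idem_mul h hf he
  obtain ⟨y, _, hy⟩ := h (e * f)
  have a1 : e * f = y := hy _ ⟨by rw [h1, h1], by rw [h1, h1]⟩
  have a2 : f * e = y := by
    apply hy
    constructor
    · calc e * f * (f * e) * (e * f) = e * (f * f) * (e * e) * f := by simp only [mul_assoc]
        _ = e * f * (e * f) := by rw [he, hf]; simp only [mul_assoc]
        _ = e * f := h1
    · calc f * e * (e * f) * (f * e) = f * (e * e) * (f * f) * e := by simp only [mul_assoc]
        _ = f * e * (f * e) := by rw [he, hf]; simp only [mul_assoc]
        _ = f * e := h2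
  rw [a1, a2]

/-- The idempotents `x^k y^k`. -/
def ee (x y : M) (k : ℕ) : M := x ^ k * y ^ k

theorem ee_zero (x y : M) : ee x y 0 = 1 := by simp [ee]

theorem ee_succ (x y : M) (k : ℕ) : ee x y (k + 1) = x * ee x y k * y := by
  simp only [ee, pow_succ' x, pow_succ y, mul_assoc]

theorem yx_idem {x y : M} (hxy : x * y * x = x) : (y * x) * (y * x) = y * x := by
  rw [mul_assoc, ← mul_assoc x, hxy]

theorem shift (h : IsInverseMonoid M) {x y e : M} (hxy : x * y * x = x)
    (he : e * e = e) : x * e * y * x = x * e := by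
  have hc := idem_comm h he (yx_idem hxy)
  calc x * e * y * x = x * (e * (y * x)) := by simp only [mul_assoc]
    _ = x * y * x * e := by rw [hc]; simp only [mul_assoc]
    _ = x * e := by rw [hxy]

theorem ee_idem (h : IsInverseMonoid M) {x y : M} (hxy : x * y * x = x) (k : ℕ) :
    ee x y k * ee x y k = ee x y k := by
  induction k with
  | zero => simp [ee_zero]
  | succ k ih =>
    rw [ee_succ]
    calc x * ee x y k * y * (x * ee x y k * y) = (x * ee x y k * y * x) * ee x y k * y := by
          simp only [mul_assoc]
      _ = x * (ee x y k * ee x y k) * y := by rw [shift h hxy ih]; simp only [mul_assoc]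
      _ = _ := by rw [ih]

theorem x_ee (h : IsInverseMonoid M) {x y : M} (hxy : x * y * x = x) (k : ℕ) :
    x * ee x y k = ee x y (k + 1) * x := by
  rw [ee_succ, shift h hxy (ee_idem h hxy k)]

theorem ee_mul_le (h : IsInverseMonoid M) {x y : M} (hxy : x * y * x = x) :
    ∀ k m : ℕ, k ≤ m → ee x y m * ee x y k = ee x y m
  | 0, m, _ => by simp [ee_zero]
  | k + 1, 0, hk => by omega
  | k + 1, m + 1, hk => by
    have ih := ee_mul_le h hxy k m (by omega)
    rw [ee_succ, ee_succ]
    calc x * ee x y m * y * (x * ee x y k * y) = (x * ee x y m * y * x) * ee x y k * y := by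
          simp only [mul_assoc]
      _ = x * (ee x y m * ee x y k) * y := by
          rw [shift h hxy (ee_idem h hxy m)]; simp only [mul_assoc]
      _ = _ := by rw [ih]

theorem ee_mul (h : IsInverseMonoid M) {x y : M} (hxy : x * y * x = x) (k m : ℕ) :
    ee x y k * ee x y m = ee x y (max k m) := by
  rcases le_total k m with hk | hk
  · rw [idem_comm h (ee_idem h hxy k) (ee_idem h hxy m), ee_mul_le h hxy k m hk, max_eq_right hk]
  · rw [ee_mul_le h hxy m k hk, max_eq_left hk]

theorem ee_pow (h : IsInverseMonoid M) {x y : M} (hxy : x * y * x = x) (k : ℕ) :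
    ee x y k * x ^ k = x ^ k := by
  induction k with
  | zero => simp [ee_zero]
  | succ k ih =>
    rw [pow_succ', ← mul_assoc, ← x_ee h hxy, mul_assoc, ih]

/-- The height of a path made from unit steps with given excursions. -/
def gg : List ℕ → ℕ
  | [] => 0
  | a :: t => max a (gg t + 1)

theorem prod_gg (h : IsInverseMonoid M) {x y : M} (hxy : x * y * x = x) (L : List ℕ) :
    (L.map fun k => ee x y k * x).prod = ee x y (gg L) * x ^ L.length := by
  induction L with
  | nil => simp [gg, ee_zero]
  | cons a t ih =>
    rw [List.map_cons, List.prod_cons, ih, List.length_cons, pow_succ', gg, ← ee_mul h hxy]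
    calc ee x y a * x * (ee x y (gg t) * x ^ t.length)
        = ee x y a * (x * ee x y (gg t)) * x ^ t.length := by simp only [mul_assoc]
      _ = _ := by rw [x_ee h hxy]; simp only [mul_assoc]

theorem gg_le (c : ℕ) : ∀ L : List ℕ, L.length ≤ c →
    (∀ i (hi : i < L.length), L[i] + i ≤ c) → gg L ≤ c := by
  intro L
  induction L generalizing c with
  | nil => intros; simp [gg]
  | cons a t ih =>
    intro hl hi
    simp only [List.length_cons] at hl
    have h0 := hi 0 (by simp)
    simp only [List.getElem_cons_zero] at h0
    have := ih (c - 1) (by omega) (fun i hi' => by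
      have := hi (i + 1) (by simpa using hi')
      simp only [List.getElem_cons_succ] at this
      omega)
    simp only [gg]
    omega

theorem le_gg : ∀ (L : List ℕ) i (hi : i < L.length), L[i] + i ≤ gg L := by
  intro L
  induction L with
  | nil => intro i hi; simp at hi
  | cons a t ih =>
    intro i hi
    cases i with
    | zero => simp [gg]
    | succ i =>
      have := ih i (by simpa using hi)
      simp only [List.getElem_cons_succ, gg]
      omega

theorem exists_lt_of_ne_one {n : ℕ} {σ : Equiv.Perm (Fin n)} (hσ : σ ≠ 1) :
    ∃ i, σ i < i := by
  by_contra! hc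
  apply hσ
  have hs : ∑ i, ((i : Fin n) : ℕ) = ∑ i, ((σ i : Fin n) : ℕ) :=
    (Equiv.sum_comp σ (fun i : Fin n => (i : ℕ))).symm
  have := (Finset.sum_eq_sum_iff_of_le (fun (i : Fin n) _ => Fin.le_def.1 (hc i))).1 hs
  ext i
  simpa using (this i (Finset.mem_univ i)).symm

theorem ee_stab (h : IsInverseMonoid M) {n : ℕ} (hp : NPermutable M n) {x y : M}
    (hxy : x * y * x = x) : ee x y n = ee x y (n + 1) := by
  obtain ⟨σ, hσ, hs⟩ := hp (fun i => ee x y (n - i) * x)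
  obtain ⟨i, hi⟩ := exists_lt_of_ne_one hσ
  have e1 : ∀ τ : Fin n → Fin n, (List.ofFn fun i => ee x y (n - (τ i : ℕ)) * x) =
      (List.ofFn fun i => n - (τ i : ℕ)).map fun k => ee x y k * x := by
    intro τ
    rw [List.map_ofFn]; rfl
  have e2 := e1 id
  simp only [id] at e2
  rw [e2, e1 σ, prod_gg h hxy, prod_gg h hxy, List.length_ofFn, List.length_ofFn] at hs
  have g1 : gg (List.ofFn fun i : Fin n => n - (i : ℕ)) ≤ n := by
    apply gg_le
    · simp
    · intro j hj
      simp only [List.length_ofFn] at hj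
      simp only [List.getElem_ofFn]
      omega
  have g2 : n < gg (List.ofFn fun i : Fin n => n - (σ i : ℕ)) := by
    have := le_gg (List.ofFn fun i : Fin n => n - (σ i : ℕ)) i (by simp)
    simp only [List.getElem_ofFn, Fin.eta] at this
    have h1 : (σ i : ℕ) < i := hi
    have := i.2
    omega
  generalize gg (List.ofFn fun i : Fin n => n - (σ i : ℕ)) = m at *
  generalize gg (List.ofFn fun i : Fin n => n - (i : ℕ)) = l at *
  have h3 : ee x y l * x ^ n = x ^ n := by
    rw [← ee_pow h hxy n, ← mul_assoc, ee_mul h hxy, max_eq_right g1]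
  rw [h3] at hs
  have h4 : ee x y n = ee x y m := by
    calc ee x y n = x ^ n * y ^ n := rfl
      _ = ee x y m * ee x y n := by
        conv_lhs => rw [hs]
        simp only [ee, mul_assoc]
      _ = ee x y m := ee_mul_le h hxy n m g2.le
  have h5 := ee_mul_le h hxy n (n + 1) (by omega)
  rw [← h5, h4, ee_mul h hxy, max_eq_right (by omega)]

theorem ee_stab' (h : IsInverseMonoid M) {n : ℕ} (hp : NPermutable M n) {x y : M}
    (hxy : x * y * x = x) (k : ℕ) : ee x y (n + k) = ee x y n := by
  induction k with
  | zero => rfl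
  | succ k ih =>
    rw [← add_assoc, ee_succ, ih, ← ee_succ, ← ee_stab h hp hxy]

theorem periodic (h : IsInverseMonoid M) {n : ℕ} (hn : 2 ≤ n) (hp : NPermutable M n)
    (hsub : ∀ S : Subsemigroup M, IsSubgroupOfMonoid S → SubsemigroupFG S →
          ∀ x ∈ S, IsPeriodicElem x) (x : M) : IsPeriodicElem x := by
  obtain ⟨y, ⟨hxy, hyx⟩, -⟩ := h x
  have a1 := ee_stab' h hp hxy n
  have a2 := ee_stab' h hp hyx n
  have i1 := ee_idem h hxy n
  have i2 := ee_idem h hyx n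
  have b1 := ee_pow h hxy n
  have b2 := ee_pow h hyx n
  simp only [ee, pow_add] at a1 a2 i1 i2 b1 b2
  suffices hs : IsPeriodicElem (x ^ n) by
    obtain ⟨i, j, hi, hij, he⟩ := hs
    refine ⟨n * i, n * j, by nlinarith, by nlinarith, ?_⟩
    rw [pow_mul, pow_mul, he]
  generalize x ^ n = u at *
  generalize y ^ n = v at *
  have hc := idem_comm h i1 i2
  have c1 : v * u = u * v * (v * u) := by
    calc v * u = v * (u * v) * u := by
          rw [← mul_assoc, b2]
      _ = v * (u * u * (v * v)) * u := by rw [a1]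
      _ = (v * u) * ((u * v) * (v * u)) := by simp only [mul_assoc]
      _ = (v * u) * (v * u) * (u * v) := by rw [hc]; simp only [mul_assoc]
      _ = u * v * (v * u) := by rw [i2, hc]
  have c2 : u * v = u * v * (v * u) := by
    calc u * v = u * (v * u) * v := by
          rw [← mul_assoc, b1]
      _ = u * (v * v * (u * u)) * v := by rw [a2]
      _ = (u * v) * ((v * u) * (u * v)) := by simp only [mul_assoc]
      _ = (u * v) * (u * v) * (v * u) := by rw [← hc]; simp only [mul_assoc]
      _ = u * v * (v * u) := by rw [i1]
  have c : u * v = v * u := c2.trans c1.symm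
  classical
  have hu : u ∈ Subsemigroup.closure (({u, v} : Finset M) : Set M) :=
    Subsemigroup.subset_closure (by simp)
  have hv : v ∈ Subsemigroup.closure (({u, v} : Finset M) : Set M) :=
    Subsemigroup.subset_closure (by simp)
  refine hsub (Subsemigroup.closure (({u, v} : Finset M) : Set M)) ?_ ⟨_, rfl⟩ u hu
  have hid : ∀ z ∈ Subsemigroup.closure (({u, v} : Finset M) : Set M),
      u * v * z = z ∧ z * (u * v) = z := by
    intro z hz
    induction hz using Subsemigroup.closure_induction with
    | mem z hz =>
      simp only [Finset.coe_insert, Finset.coe_singleton, Set.mem_insert_iff,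
        Set.mem_singleton_iff] at hz
      rcases hz with rfl | rfl
      · exact ⟨b1, by rw [c, ← mul_assoc, b1]⟩
      · exact ⟨by rw [c, b2], by rw [← mul_assoc, b2]⟩
    | mul a b _ _ ha hb =>
      exact ⟨by rw [← mul_assoc, ha.1], by rw [mul_assoc, hb.2]⟩
  refine ⟨u * v, mul_mem hu hv, hid, ?_⟩
  intro z hz
  induction hz using Subsemigroup.closure_induction with
  | mem z hz =>
    simp only [Finset.coe_insert, Finset.coe_singleton, Set.mem_insert_iff,
      Set.mem_singleton_iff] at hz
    rcases hz with rfl | rfl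
    · exact ⟨v, hv, rfl, c.symm⟩
    · exact ⟨u, hu, c.symm, rfl⟩
  | mul a b ha hb iha ihb =>
    obtain ⟨a', ha', a3, a4⟩ := iha
    obtain ⟨b', hb', b3, b4⟩ := ihb
    refine ⟨b' * a', mul_mem hb' ha', ?_, ?_⟩
    · rw [mul_assoc, ← mul_assoc b, b3, (hid a' ha').1, a3]
    · rw [mul_assoc, ← mul_assoc a', a4, (hid b hb).1, b4]

end Inverse

/-! ### Combinatorics on words -/

section Words

variable {k : ℕ}

theorem lt_append_of_length_eq : ∀ {u v : List (Fin k)}, u.length = v.length → u < v →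
    ∀ x y, u ++ x < v ++ y := by
  intro u
  induction u with
  | nil =>
    intro v hl huv
    have : v = [] := List.length_eq_zero_iff.1 hl.symm
    subst this
    exact absurd huv (lt_irrefl _)
  | cons a u ih =>
    intro v hl huv x y
    cases v with
    | nil => simp at hl
    | cons b v =>
      rw [List.cons_append, List.cons_append, List.cons_lt_cons_iff]
      rw [List.cons_lt_cons_iff] at huv
      rcases huv with h | ⟨h, h'⟩
      · exact Or.inl h
      · exact Or.inr ⟨h, ih (by simpa using hl) h' x y⟩

/-- `b'` is strongly smaller than `b`. -/
def RR (b b' : List (Fin k)) : Prop := ∀ x y, b' ++ x < b ++ y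

theorem flatten_lt (c : List (Fin k)) : ∀ (Bs Cs : List (List (Fin k))), Bs.Pairwise RR →
    Cs.Perm Bs → Cs ≠ Bs → Cs.flatten ++ c < Bs.flatten ++ c := by
  intro Bs
  induction Bs with
  | nil =>
    intro Cs _ hp hne
    exact absurd hp.eq_nil hne
  | cons b Bs ih =>
    intro Cs hR hp hne
    cases Cs with
    | nil => simp at hp
    | cons c0 Cs =>
      rw [List.pairwise_cons] at hR
      by_cases hc : c0 = b
      · subst hc
        rw [List.perm_cons] at hp
        have := ih Cs hR.2 hp (fun h => hne (by rw [h]))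
        simp only [List.flatten_cons, List.append_assoc]
        exact List.append_left_lt this
      · have hm : c0 ∈ Bs := by
          have : c0 ∈ b :: Bs := hp.subset (by simp)
          simpa [hc] using this
        have := hR.1 c0 hm
        simp only [List.flatten_cons, List.append_assoc]
        exact this _ _

/-- `v` occurs `m` times disjointly in `w`. -/
def Rep (v : List (Fin k)) : ℕ → List (Fin k) → Prop
  | 0, _ => True
  | m + 1, w => ∃ a c, w = a ++ v ++ c ∧ Rep v m c

theorem Rep.append_left {v : List (Fin k)} {m : ℕ} {w : List (Fin k)} (h : Rep v m w)
    (x : List (Fin k)) : Rep v m (x ++ w) := by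
  cases m with
  | zero => trivial
  | succ m =>
    obtain ⟨a, c, rfl, hc⟩ := h
    exact ⟨x ++ a, c, by simp, hc⟩

theorem rep_of_count (v r : List (Fin k)) : ∀ (cs : List (List (Fin k))) (m : ℕ),
    m ≤ cs.count v → Rep v m (cs.flatten ++ r) := by
  intro cs
  induction cs with
  | nil =>
    intro m hm
    have : m = 0 := by simpa using hm
    subst this
    trivial
  | cons b cs ih =>
    intro m hm
    by_cases hb : b = v
    · subst hb
      cases m with
      | zero => trivial
      | succ m =>
        rw [List.count_cons_self] at hm
        exact ⟨[], cs.flatten ++ r, by simp, ih m (by omega)⟩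
    · rw [List.count_cons_of_ne hb] at hm
      have := (ih m hm).append_left b
      simpa using this

theorem chunks (L : ℕ) : ∀ (N : ℕ) (w : List (Fin k)), L * N ≤ w.length →
    ∃ (cs : List (List (Fin k))) (r : List (Fin k)), w = cs.flatten ++ r ∧ cs.length = N ∧
      ∀ b ∈ cs, b.length = L := by
  intro N
  induction N with
  | zero => intro w _; exact ⟨[], w, by simp, rfl, by simp⟩
  | succ N ih =>
    intro w hw
    rw [Nat.mul_succ] at hw
    obtain ⟨cs, r, h1, h2, h3⟩ := ih (w.drop L) (by rw [List.length_drop]; omega)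
    refine ⟨w.take L :: cs, r, ?_, by simp [h2], ?_⟩
    · rw [List.flatten_cons, List.append_assoc, ← h1, List.take_append_drop]
    · intro b hb
      rcases List.mem_cons.1 hb with rfl | hb
      · rw [List.length_take]; omega
      · exact h3 b hb

theorem exists_rep (k L n : ℕ) : ∃ B : ℕ, ∀ w : List (Fin k), B ≤ w.length →
    ∃ v : List (Fin k), v.length = L ∧ Rep v n w := by
  classical
  set S : Finset (List (Fin k)) := (List.finite_length_eq (Fin k) L).toFinset with hS
  refine ⟨L * (S.card * n + 1), fun w hw => ?_⟩
  obtain ⟨cs, r, h1, h2, h3⟩ := chunks L _ w hw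
  by_contra! hc
  have hlt : ∀ v ∈ S, cs.count v ≤ n := by
    intro v hv
    by_contra! hcn
    refine hc v (by simpa [hS] using hv) ?_
    rw [h1]
    exact rep_of_count v r cs n hcn.le
  have hsum := Multiset.sum_count_eq_card (s := S) (m := (cs : Multiset (List (Fin k))))
    (fun a ha => by simpa [hS] using h3 a (by simpa using ha))
  simp only [Multiset.coe_count, Multiset.coe_card] at hsum
  have := Finset.sum_le_card_nsmul S (fun v => cs.count v) n hlt
  have hsum2 : ∑ v ∈ S, cs.count v = cs.length := by
    rw [← hsum]
    refine Finset.sum_congr rfl fun v _ => ?_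
    congr 1
    exact lawful_beq_subsingleton _ _
  rw [hsum2, h2, smul_eq_mul] at this
  omega

theorem blocks_of_rep {v : List (Fin k)} : ∀ (vs : List (List (Fin k))) (w : List (Fin k)),
    (∀ x ∈ vs, x <:+: v) → Rep v vs.length w →
    ∃ (bs : List (List (Fin k))) (a c : List (Fin k)),
      List.Forall₂ (fun x b => x <+: b) vs bs ∧ w = a ++ bs.flatten ++ c := by
  intro vs
  induction vs with
  | nil => intro w _ _; exact ⟨[], w, [], .nil, by simp⟩
  | cons x vs ih =>
    intro w hx hw
    obtain ⟨a, c, rfl, hc⟩ := hw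
    obtain ⟨bs, a', c', hf, rfl⟩ := ih c (fun z hz => hx z (by simp [hz])) hc
    obtain ⟨y, z, rfl⟩ := hx x (by simp)
    refine ⟨(x ++ z ++ a') :: bs, a ++ y, c', .cons ⟨z ++ a', by simp⟩ hf, by simp⟩

theorem period (d : ℕ) : ∀ (p K : ℕ) (z : List (Fin k)), d * p ≤ K → K + d ≤ z.length →
    z.take K = (z.drop d).take K → (List.replicate p (z.take d)).flatten <+: z := by
  intro p
  induction p with
  | zero => intros; simp
  | succ p ih =>
    intro K z h1 h2 h3
    rw [Nat.mul_succ] at h1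
    have hu : (z.drop d).take d = z.take d := by
      have := congrArg (List.take d) h3
      rw [List.take_take, List.take_take, min_eq_left (by omega)] at this
      exact this.symm
    have h4 := ih (K - d) (z.drop d) (by omega) (by rw [List.length_drop]; omega) (by
      have := congrArg (List.drop d) h3
      rwa [List.drop_take, List.drop_take] at this)
    rw [hu] at h4
    obtain ⟨t, ht⟩ := h4
    refine ⟨t, ?_⟩
    rw [List.replicate_succ, List.flatten_cons, List.append_assoc, ht, List.take_append_drop]

/-- Shirshov-type theorem. -/
theorem shirshov (k n p : ℕ) : ∃ B : ℕ, ∀ w : List (Fin k), B ≤ w.length →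
    (∃ u : List (Fin k), u ≠ [] ∧ u.length < n ∧ (List.replicate p u).flatten <:+: w) ∨
    (∃ (bs : List (List (Fin k))) (a c : List (Fin k)), bs.length = n ∧ bs.Pairwise RR ∧
      w = a ++ bs.flatten ++ c) := by
  classical
  obtain ⟨B, hB⟩ := exists_rep k (n + n * p) n
  refine ⟨max B 1, fun w hw => ?_⟩
  rcases Nat.eq_zero_or_pos n with rfl | hn
  · exact Or.inr ⟨[], w, [], rfl, .nil, by simp⟩
  obtain ⟨v, hv, hrep⟩ := hB w (by omega)
  have hvw : v <:+: w := by
    obtain ⟨m, rfl⟩ : ∃ m, n = m + 1 := ⟨n - 1, by omega⟩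
    obtain ⟨a, c, rfl, _⟩ := hrep
    exact ⟨a, c, rfl⟩
  let W : ℕ → List (Fin k) := fun i => (v.drop i).take (n * p)
  by_cases hinj : Set.InjOn W (Finset.range n : Finset ℕ)
  · right
    set S : Finset (List (Fin k)) := (Finset.range n).image W with hS
    have hcard : S.card = n := by
      rw [hS, Finset.card_image_of_injOn hinj, Finset.card_range]
    have hlen : (S.sort (· ≥ ·)).length = n := by rw [Finset.length_sort, hcard]
    have hmem : ∀ x ∈ S.sort (· ≥ ·), x <:+: v ∧ x.length = n * p := by
      intro x hx
      rw [Finset.mem_sort, hS, Finset.mem_image] at hx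
      obtain ⟨i, hi, rfl⟩ := hx
      rw [Finset.mem_range] at hi
      refine ⟨List.IsInfix.trans ⟨[], _, by rw [List.nil_append]; exact List.take_append_drop _ _⟩ (List.drop_suffix _ _).isInfix, ?_⟩
      simp only [W, List.length_take, List.length_drop]
      omega
    have hsort : (S.sort (· ≥ ·)).Pairwise (· > ·) := (Finset.sortedGT_sort S).pairwise
    obtain ⟨bs, a, c, hf, hw'⟩ := blocks_of_rep (S.sort (· ≥ ·)) w (fun x hx => (hmem x hx).1)
      (by rw [hlen]; exact hrep)
    refine ⟨bs, a, c, by rw [← hf.length_eq, hlen], ?_, hw'⟩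
    rw [List.pairwise_iff_getElem] at hsort ⊢
    intro i j hi hj hij x y
    have hl := hf.length_eq
    have hi' : i < (S.sort (· ≥ ·)).length := by omega
    have hj' : j < (S.sort (· ≥ ·)).length := by omega
    have hlt := hsort i j hi' hj' hij
    have pi := (List.forall₂_iff_get.1 hf).2 i hi' hi
    have pj := (List.forall₂_iff_get.1 hf).2 j hj' hj
    simp only [List.get_eq_getElem] at pi pj
    have li := (hmem _ (List.getElem_mem hi')).2
    have lj := (hmem _ (List.getElem_mem hj')).2
    obtain ⟨ti, hti⟩ := pi
    obtain ⟨tj, htj⟩ := pj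
    rw [← hti, ← htj, List.append_assoc, List.append_assoc]
    exact lt_append_of_length_eq (lj.trans li.symm) hlt _ _
  · left
    have : ∃ i j, i < j ∧ j < n ∧ W i = W j := by
      simp only [Set.InjOn, not_forall] at hinj
      obtain ⟨i, hi, j, hj, hW, hne⟩ := hinj
      simp only [Finset.coe_range, Set.mem_Iio] at hi hj
      rcases lt_or_gt_of_ne hne with h | h
      · exact ⟨i, j, h, hj, hW⟩
      · exact ⟨j, i, h, hi, hW.symm⟩
    obtain ⟨i, j, hij, hj, hW⟩ := this
    have hle : (j - i) * p ≤ n * p := Nat.mul_le_mul_right _ (by omega)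
    have hper := period (j - i) p (n * p) (v.drop i) hle
      (by rw [List.length_drop]; omega)
      (by
        rw [List.drop_drop, show i + (j - i) = j by omega]
        exact hW)
    have hul : ((v.drop i).take (j - i)).length = j - i := by
      rw [List.length_take, List.length_drop]; omega
    refine ⟨(v.drop i).take (j - i), ?_, by omega, ?_⟩
    · intro h0
      rw [h0] at hul
      simp at hul
      omega
    · exact hper.isInfix.trans ((List.drop_suffix _ _).isInfix.trans hvw)

end Words

theorem finite_of_periodic {M : Type} [Monoid M] (hfg : Monoid.FG M) {n : ℕ}
    (hp : NPermutable M n) (hper : ∀ x : M, IsPeriodicElem x) : Finite M := by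
  classical
  obtain ⟨T, hT⟩ := Monoid.fg_def.1 hfg
  let k := T.card
  let f : Fin k → M := fun i => (T.equivFin.symm i : M)
  let φ : List (Fin k) → M := fun w => (w.map f).prod
  have φapp : ∀ u v, φ (u ++ v) = φ u * φ v := fun u v => by simp [φ]
  have φflat : ∀ bs : List (List (Fin k)), φ bs.flatten = (bs.map φ).prod := by
    intro bs
    induction bs with
    | nil => simp [φ]
    | cons b bs ih => rw [List.flatten_cons, φapp, ih, List.map_cons, List.prod_cons]
  have φpow : ∀ u p, φ (List.replicate p u).flatten = φ u ^ p := by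
    intro u p
    rw [φflat, List.map_replicate, List.prod_replicate]
  have φsurj : ∀ m, ∃ w, φ w = m := by
    intro m
    have hm : m ∈ Submonoid.closure (T : Set M) := by rw [hT]; trivial
    obtain ⟨l, hl, rfl⟩ := Submonoid.exists_list_of_mem_closure hm
    clear hm
    induction l with
    | nil => exact ⟨[], by simp [φ]⟩
    | cons a l ih =>
      obtain ⟨w, hw⟩ := ih (fun y hy => hl y (by simp [hy]))
      have ha : a ∈ T := by simpa using hl a (by simp)
      refine ⟨T.equivFin ⟨a, ha⟩ :: w, ?_⟩
      rw [List.prod_cons, ← hw]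
      simp [φ, f]
  -- a uniform exponent
  obtain ⟨p, hpu⟩ : ∃ p, ∀ u : List (Fin k), u.length < n → ∃ q < p, φ u ^ q = φ u ^ p := by
    have h1 : ∀ u : List (Fin k), ∃ j i, i < j ∧ φ u ^ i = φ u ^ j := fun u => by
      obtain ⟨i, j, _, hij, he⟩ := hper (φ u)
      exact ⟨j, i, hij, he⟩
    choose j i hij he using h1
    obtain ⟨p, hpb⟩ := ((List.finite_length_lt (Fin k) n).image j).bddAbove
    refine ⟨p, fun u hu => ?_⟩
    have hjp : j u ≤ p := hpb ⟨u, hu, rfl⟩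
    have := hij u
    refine ⟨i u + (p - j u), by omega, ?_⟩
    rw [pow_add, he, ← pow_add]
    congr 1
    omega
  obtain ⟨B, hB⟩ := shirshov k n p
  have hwf : WellFounded (List.Shortlex (α := Fin k) (· < ·)) := List.Shortlex.wf wellFounded_lt
  have key : ∀ m, ∃ w, w.length < B ∧ φ w = m := by
    intro m
    obtain ⟨w, hw, hmin⟩ := hwf.has_min {w | φ w = m} (φsurj m)
    refine ⟨w, ?_, hw⟩
    by_contra! hlen
    rcases hB w hlen with ⟨u, hu0, hun, a, c, rfl⟩ | ⟨bs, a, c, hbl, hR, rfl⟩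
    · obtain ⟨q, hq, hqe⟩ := hpu u hun
      refine hmin (a ++ (List.replicate q u).flatten ++ c) ?_ (List.Shortlex.of_length_lt ?_)
      · simp only [Set.mem_ofPred_eq] at hw ⊢
        rw [← hw]
        simp only [φapp, φpow, hqe]
      · have hul : 0 < u.length := List.length_pos_iff.2 hu0
        have := Nat.mul_lt_mul_of_pos_right hq hul
        simp only [List.length_append, List.length_flatten, List.map_replicate,
          List.sum_replicate, smul_eq_mul]
        omega
    · subst hbl
      obtain ⟨σ, hσ, hs⟩ := hp (fun i => φ (bs.get i))
      have hof : List.ofFn bs.get = bs := List.ofFn_get bs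
      set Cs : List (List (Fin k)) := List.ofFn (bs.get ∘ σ) with hCs
      have hperm : Cs.Perm bs := by
        have := Equiv.Perm.ofFn_comp_perm σ bs.get
        rwa [hof] at this
      have hne : Cs ≠ bs := by
        intro h
        apply hσ
        have h2 : List.ofFn (bs.get ∘ σ) = List.ofFn bs.get := by rw [hof]; exact h
        have h3 := List.ofFn_injective h2
        have hnd : bs.Nodup := hR.imp (fun {x y} hxy h => by
          subst h
          exact lt_irrefl _ (hxy [] []))
        ext i
        have := congrFun h3 i
        have := (List.nodup_iff_injective_get.1 hnd) this
        simp [this]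
      have hlt := flatten_lt c bs Cs hR hperm hne
      refine hmin (a ++ Cs.flatten ++ c) ?_ (List.Shortlex.of_lex ?_ ?_)
      · simp only [Set.mem_ofPred_eq] at hw ⊢
        rw [← hw]
        have : φ Cs.flatten = φ bs.flatten := by
          rw [φflat, φflat]
          conv_rhs => rw [← hof]
          rw [hCs, List.map_ofFn, List.map_ofFn]
          exact hs.symm
        simp only [φapp, this]
      · simp only [List.length_append, hperm.flatten.length_eq]
      · rw [List.append_assoc, List.append_assoc]
        exact List.Lex.append_left _ (List.lex_lt.2 hlt) a
  have hfin : (Set.univ : Set M).Finite := by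
    refine ((List.finite_length_lt (Fin k) B).image φ).subset ?_
    intro m _
    obtain ⟨w, hw, rfl⟩ := key m
    exact ⟨w, hw, rfl⟩
  exact Set.finite_univ_iff.1 hfin

theorem permutable_of_finite {M : Type} [Monoid M] [Finite M] : Permutable M := by
  classical
  have := Fintype.ofFinite M
  have hpos : 0 < Fintype.card M := Fintype.card_pos
  refine ⟨Fintype.card M + 1, by omega, fun s => ?_⟩
  obtain ⟨i, j, hij, hs⟩ := Fintype.exists_ne_map_eq_of_card_lt s (by simp)
  refine ⟨Equiv.swap i j, fun h => hij (Equiv.swap_eq_one_iff.1 h), ?_⟩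
  congr 2
  funext t
  rw [Equiv.swap_apply_def]
  split_ifs with h1 h2
  · rw [h1, hs]
  · rw [h2, hs]
  · rfl

theorem isPeriodic_of_finite {M : Type} [Monoid M] [Finite M] (x : M) : IsPeriodicElem x := by
  obtain ⟨i, j, hij, he⟩ := Finite.exists_ne_map_eq_of_infinite (fun t : ℕ => x ^ (t + 1))
  rcases lt_or_gt_of_ne hij with h | h
  · exact ⟨i + 1, j + 1, by omega, by omega, he⟩
  · exact ⟨j + 1, i + 1, by omega, by omega, he.symm⟩

end PermInv

/-- Let `M` be a finitely generated inverse monoid. Then `M` is finite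
if and only if `M` is permutable and every finitely generated subgroup of `M` is periodic. -/
theorem finite_iff_permutable_and_fg_subgroups_periodic
    (M : Type) [Monoid M] (hfg : Monoid.FG M) (hinv : IsInverseMonoid M) :
    Finite M ↔
      (Permutable M ∧
        ∀ S : Subsemigroup M, IsSubgroupOfMonoid S → SubsemigroupFG S →
          ∀ x ∈ S, IsPeriodicElem x) := by
  constructor
  · intro hM
    exact ⟨PermInv.permutable_of_finite, fun _ _ _ x _ => PermInv.isPeriodic_of_finite x⟩
  · rintro ⟨⟨n, hn, hp⟩, hsub⟩
    exact PermInv.finite_of_periodic hfg hp (PermInv.periodic hinv hn hp hsub)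
end

section
/- Let M be a finitely generated inverse permutable monoid. If M has an infinite subgroup, then the language L₁ = {aⁿbⁿ : n ≥ 1} over the alphabet {a, b} belongs to 𝔏_Rat(M). -/
open scoped Pointwise

/-- The rational subsets of a monoid: the closure of the finite subsets under
union, (pointwise) product and Kleene star (i.e. generated submonoid). -/
inductive IsRatSet {M : Type} [Monoid M] : Set M → Prop
  | of_finite (S : Set M) : S.Finite → IsRatSet S
  | union (S T : Set M) : IsRatSet S → IsRatSet T → IsRatSet (S ∪ T)
  | mul (S T : Set M) : IsRatSet S → IsRatSet T → IsRatSet (S * T)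
  | star (S : Set M) : IsRatSet S → IsRatSet (Submonoid.closure S : Set M)

/-- A rational monoid automaton over `M` with input alphabet `α`: a nondeterministic
finite automaton whose transitions (on letters or on `ε`, encoded by `none`) are labeled
by elements of `M`, together with rational initial and terminal sets `I0, I1 ⊆ M`. -/
structure RatMonoidAutomaton (α : Type) (M : Type) [Monoid M] where
  Q : Type
  fintypeQ : Fintype Q
  start : Q
  accept : Set Q
  step : Q → Option α → Set (Q × M)
  I0 : Set M
  I1 : Set M
  ratI0 : IsRatSet I0
  ratI1 : IsRatSet I1

namespace RatMonoidAutomaton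

variable {α M : Type} [Monoid M]

/-- `A.Reaches q w m q'` holds if there is a computation of `A` from state `q` to state `q'`
reading the word `w` (with `ε`-moves allowed) whose product of labels is `m`. -/
inductive Reaches (A : RatMonoidAutomaton α M) : A.Q → List α → M → A.Q → Prop
  | refl (q : A.Q) : Reaches A q [] 1 q
  | letter {q q' q'' : A.Q} {a : α} {w : List α} {m m' : M} :
      (q', m) ∈ A.step q (some a) → Reaches A q' w m' q'' →
      Reaches A q (a :: w) (m * m') q''
  | eps {q q' q'' : A.Q} {w : List α} {m m' : M} :
      (q', m) ∈ A.step q none → Reaches A q' w m' q'' →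
      Reaches A q w (m * m') q''

/-- The language accepted by a rational monoid automaton: `w` is accepted if some
computation on `w` from the initial state to an accepting state has label product `x`
with `x₀ * x ∈ I1` for some `x₀ ∈ I0`. -/
def lang (A : RatMonoidAutomaton α M) : Language α :=
  { w | ∃ q ∈ A.accept, ∃ m : M, A.Reaches A.start w m q ∧ ∃ x0 ∈ A.I0, x0 * m ∈ A.I1 }

end RatMonoidAutomaton

/-- `𝔏_Rat(M)`: the family of languages over the alphabet `α` accepted by rational
monoid automata over `M`. -/
def LRat (α : Type) (M : Type) [Monoid M] : Set (Language α) :=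
  { L | ∃ A : RatMonoidAutomaton α M, A.lang = L }

/-- The language `L₁ = {aⁿbⁿ : n ≥ 1}` over the two-letter alphabet `Fin 2`
(where `a = 0` and `b = 1`). -/
def LangL1 : Language (Fin 2) :=
  { w | ∃ n : ℕ, 1 ≤ n ∧ w = List.replicate n 0 ++ List.replicate n 1 }

/-! ### Permutations -/

theorem perm_first_moved {n : ℕ} (σ : Equiv.Perm (Fin n)) (hσ : σ ≠ 1) :
    ∃ k : Fin n, (∀ j, j < k → σ j = j) ∧ k < σ k := by
  have hex : ∃ k : ℕ, ∃ h : k < n, σ ⟨k, h⟩ ≠ ⟨k, h⟩ := by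
    by_contra hcon
    push Not at hcon
    apply hσ
    ext i
    simp [hcon i.1 i.2]
  classical
  obtain ⟨hk, hne⟩ := Nat.find_spec hex
  have hmin : ∀ j : Fin n, j < ⟨Nat.find hex, hk⟩ → σ j = j := by
    intro j hj
    by_contra hj'
    exact Nat.find_min hex (show j.1 < Nat.find hex from hj) ⟨j.2, hj'⟩
  refine ⟨⟨Nat.find hex, hk⟩, hmin, ?_⟩
  by_contra hlt
  have hlt' := lt_of_le_of_ne (not_lt.mp hlt) hne
  exact hne (σ.injective (hmin _ hlt'))

/-! ### Inverse monoids -/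

section Inv
variable {M : Type} [Monoid M]

theorem inv_idem_comm (hinv : IsInverseMonoid M) {e f : M} (he : e * e = e) (hf : f * f = f) :
    e * f = f * e := by
  -- products of idempotents are idempotent
  have key : ∀ e f : M, e * e = e → f * f = f → (e * f) * (e * f) = e * f := by
    intro e f he hf
    obtain ⟨z, ⟨hz1, hz2⟩, huniq⟩ := hinv (e * f)
    have h1 : f * z * e = z := by
      apply huniq
      constructor
      · calc e * f * (f * z * e) * (e * f) = e * (f * f) * z * (e * e) * f := by simp only [mul_assoc]
          _ = e * f * z * (e * f) := by rw [he, hf]; simp only [mul_assoc]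
          _ = e * f := hz1
      · calc f * z * e * (e * f) * (f * z * e) = f * (z * ((e * e) * (f * f)) * z) * e := by
              simp only [mul_assoc]
          _ = f * z * e := by rw [he, hf, hz2]
    have hzz : z * z = z := by
      calc z * z = (f * z * e) * (f * z * e) := by rw [h1]
        _ = f * (z * (e * f) * z) * e := by simp only [mul_assoc]
        _ = z := by rw [hz2, h1]
    -- z is its own inverse
    have hz3 := (hinv z).unique (y₁ := z) (y₂ := e * f) ⟨by rw [hzz, hzz], by rw [hzz, hzz]⟩ ⟨hz2, hz1⟩
    rw [← hz3, hzz]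
  have h1 := key e f he hf
  have h2 := key f e hf he
  refine (hinv (e * f)).unique (y₁ := e * f) (y₂ := f * e) ⟨by rw [h1, h1], by rw [h1, h1]⟩ ⟨?_, ?_⟩
  · calc e * f * (f * e) * (e * f) = e * (f * f) * (e * e) * f := by simp only [mul_assoc]
      _ = (e * f) * (e * f) := by rw [he, hf]; simp only [mul_assoc]
      _ = e * f := h1
  · calc f * e * (e * f) * (f * e) = f * (e * e) * (f * f) * e := by simp only [mul_assoc]
      _ = (f * e) * (f * e) := by rw [he, hf]; simp only [mul_assoc]
      _ = f * e := h2

theorem inverse_pow (hinv : IsInverseMonoid M) {x y : M} (hxy : x * y * x = x) (hyx : y * x * y = y)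
    (k : ℕ) : x ^ k * y ^ k * x ^ k = x ^ k ∧ y ^ k * x ^ k * y ^ k = y ^ k := by
  induction k with
  | zero => simp
  | succ k ih =>
    obtain ⟨h1, h2⟩ := ih
    have c1 : (y ^ k * x ^ k) * (x * y) = (x * y) * (y ^ k * x ^ k) :=
      inv_idem_comm hinv (by simp only [← mul_assoc]; rw [h2])
        (by simp only [← mul_assoc]; rw [hxy])
    constructor
    · calc x ^ (k + 1) * y ^ (k + 1) * x ^ (k + 1)
          = x ^ k * ((x * y) * (y ^ k * x ^ k)) * x := by
            rw [pow_succ x, pow_succ' y]; nth_rewrite 2 [← pow_succ x k]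
            rw [pow_succ x]; simp only [mul_assoc]
        _ = (x ^ k * y ^ k * x ^ k) * (x * y * x) := by rw [← c1]; simp only [mul_assoc]
        _ = x ^ (k + 1) := by rw [h1, hxy, pow_succ]
    · calc y ^ (k + 1) * x ^ (k + 1) * y ^ (k + 1)
          = y * ((y ^ k * x ^ k) * (x * y)) * y ^ k := by
            rw [pow_succ x, pow_succ' y]; simp only [mul_assoc]
        _ = (y * x * y) * (y ^ k * x ^ k * y ^ k) := by rw [c1]; simp only [mul_assoc]
        _ = y ^ (k + 1) := by rw [h2, hyx, pow_succ']

/-- The idempotents `y ^ k * x ^ k`. -/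
def idF (x y : M) (k : ℕ) : M := y ^ k * x ^ k

theorem idF_mul_le (hinv : IsInverseMonoid M) {x y : M} (hxy : x * y * x = x)
    (hyx : y * x * y = y) {a b : ℕ} (hab : a ≤ b) :
    idF x y a * idF x y b = idF x y b := by
  obtain ⟨c, rfl⟩ := Nat.exists_eq_add_of_le hab
  unfold idF
  rw [pow_add y]
  simp only [← mul_assoc]
  rw [(inverse_pow hinv hxy hyx a).2]

theorem idF_idem (hinv : IsInverseMonoid M) {x y : M} (hxy : x * y * x = x)
    (hyx : y * x * y = y) (a : ℕ) : idF x y a * idF x y a = idF x y a :=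
  idF_mul_le hinv hxy hyx le_rfl

theorem idF_mul (hinv : IsInverseMonoid M) {x y : M} (hxy : x * y * x = x)
    (hyx : y * x * y = y) (a b : ℕ) :
    idF x y a * idF x y b = idF x y (max a b) := by
  rcases le_total a b with h | h
  · rw [max_eq_right h, idF_mul_le hinv hxy hyx h]
  · rw [max_eq_left h, inv_idem_comm hinv (idF_idem hinv hxy hyx a) (idF_idem hinv hxy hyx b),
      idF_mul_le hinv hxy hyx h]

theorem mul_idF (hinv : IsInverseMonoid M) {x y : M} (hxy : x * y * x = x)
    (hyx : y * x * y = y) (b : ℕ) : x * idF x y b = idF x y (b - 1) * x := by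
  cases b with
  | zero => simp [idF]
  | succ b =>
    have c : (x * y) * idF x y b = idF x y b * (x * y) :=
      inv_idem_comm hinv (by simp only [← mul_assoc]; rw [hxy]) (idF_idem hinv hxy hyx b)
    calc x * idF x y (b + 1) = (x * y) * idF x y b * x := by
          unfold idF; rw [pow_succ' y, pow_succ x]; simp only [mul_assoc]
      _ = idF x y b * (x * y * x) := by rw [c]; simp only [mul_assoc]
      _ = idF x y (b + 1 - 1) * x := by rw [hxy]; simp

/-- the index of the idempotent obtained by multiplying `idF a₁ * x * idF a₂ * x * ⋯` -/
def idxG : List ℕ → ℕ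
  | [] => 0
  | a :: l => max a (idxG l - 1)

theorem pow_mul_idF_prod (hinv : IsInverseMonoid M) {x y : M} (hxy : x * y * x = x)
    (hyx : y * x * y = y) (l : List ℕ) :
    (l.map fun a => idF x y a * x).prod = idF x y (idxG l) * x ^ l.length := by
  induction l with
  | nil => simp [idxG, idF]
  | cons a l ih =>
    rw [List.map_cons, List.prod_cons, ih, idxG, List.length_cons, pow_succ',
      ← idF_mul hinv hxy hyx]
    calc idF x y a * x * (idF x y (idxG l) * x ^ l.length)
        = idF x y a * (x * idF x y (idxG l)) * x ^ l.length := by simp only [mul_assoc]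
      _ = _ := by rw [mul_idF hinv hxy hyx]; simp only [mul_assoc]

theorem idxG_le (l : List ℕ) (c : ℕ) : idxG l ≤ c ↔ ∀ i (h : i < l.length), l[i] ≤ c + i := by
  induction l generalizing c with
  | nil => simp [idxG]
  | cons a l ih =>
    rw [idxG, max_le_iff, Nat.sub_le_iff_le_add, ih]
    constructor
    · rintro ⟨h1, h2⟩ i hi
      cases i with
      | zero => simpa using h1
      | succ i =>
        have := h2 i (by simpa using hi)
        simp only [List.getElem_cons_succ]; omega
    · intro h
      refine ⟨h 0 (by simp), fun i hi => ?_⟩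
      have := h (i + 1) (by simpa using hi)
      simp only [List.getElem_cons_succ] at this; omega

theorem idF_step (hinv : IsInverseMonoid M) {x y : M} (hxy : x * y * x = x)
    (hyx : y * x * y = y) {n : ℕ} (hn : NPermutable M n) (c : ℕ) :
    idF x y c * x ^ n = idF x y (c + 1) * x ^ n := by
  obtain ⟨σ, hσ, h⟩ := hn (fun i => idF x y (c + i) * x)
  have e1 : (List.ofFn fun i : Fin n => idF x y (c + i) * x)
      = (List.ofFn fun i : Fin n => c + (i : ℕ)).map fun a => idF x y a * x := by
    rw [List.map_ofFn]; rfl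
  have e2 : (List.ofFn fun i : Fin n => idF x y (c + (σ i : Fin n)) * x)
      = (List.ofFn fun i : Fin n => c + (σ i : ℕ)).map fun a => idF x y a * x := by
    rw [List.map_ofFn]; rfl
  rw [e1, e2, pow_mul_idF_prod hinv hxy hyx, pow_mul_idF_prod hinv hxy hyx, List.length_ofFn,
    List.length_ofFn] at h
  have h1 : idxG (List.ofFn fun i : Fin n => c + (i : ℕ)) ≤ c := by
    rw [idxG_le]; intro i hi; simp
  have h2 : c + 1 ≤ idxG (List.ofFn fun i : Fin n => c + (σ i : ℕ)) := by
    by_contra hlt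
    have hle : idxG (List.ofFn fun i : Fin n => c + (σ i : ℕ)) ≤ c := by omega
    rw [idxG_le] at hle
    obtain ⟨k, -, hk⟩ := perm_first_moved σ hσ
    have := hle k (by simp)
    simp only [List.getElem_ofFn, Fin.eta] at this
    have hk' : (k : ℕ) < (σ k : ℕ) := hk
    omega
  set p := idxG (List.ofFn fun i : Fin n => c + (i : ℕ))
  set q := idxG (List.ofFn fun i : Fin n => c + (σ i : ℕ))
  have a1 : idF x y c * x ^ n = idF x y q * x ^ n := by
    have := congrArg (fun t => idF x y c * t) h
    simp only [← mul_assoc, idF_mul hinv hxy hyx] at this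
    rwa [max_eq_left h1, max_eq_right (by omega)] at this
  have a2 : idF x y (c + 1) * x ^ n = idF x y q * x ^ n := by
    have := congrArg (fun t => idF x y (c + 1) * t) h
    simp only [← mul_assoc, idF_mul hinv hxy hyx] at this
    rwa [max_eq_left (by omega), max_eq_right (by omega)] at this
  rw [a1, a2]

theorem idF_pow (hinv : IsInverseMonoid M) {x y : M} (hxy : x * y * x = x)
    (hyx : y * x * y = y) {n : ℕ} (hn : NPermutable M n) (c : ℕ) :
    idF x y c * x ^ n = x ^ n := by
  induction c with
  | zero => simp [idF]
  | succ c ih => rw [← idF_step hinv hxy hyx hn, ih]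

theorem pow_comm_inv (hinv : IsInverseMonoid M) {x y : M} (hxy : x * y * x = x)
    (hyx : y * x * y = y) {n : ℕ} (hn : NPermutable M n) :
    x ^ n * y ^ n = y ^ n * x ^ n := by
  have h1 : (y ^ n * x ^ n) * (x ^ n * y ^ n) = x ^ n * y ^ n := by
    rw [← mul_assoc]; congr 1; exact idF_pow hinv hxy hyx hn n
  have h2 : (x ^ n * y ^ n) * (y ^ n * x ^ n) = y ^ n * x ^ n := by
    rw [← mul_assoc]; congr 1; exact idF_pow hinv hyx hxy hn n
  have i1 := idF_idem hinv hxy hyx n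
  have i2 := idF_idem hinv hyx hxy n
  have h3 := inv_idem_comm hinv i1 i2
  unfold idF at h3
  rw [← h1, h3, h2]

/-- `g` is an element of infinite order in a subgroup with identity `e`; `h` is its inverse. -/
def InfOrder (e g h : M) : Prop :=
  e * g = g ∧ e * h = h ∧ g * e = g ∧ h * e = h ∧ g * h = e ∧ h * g = e ∧
    ∀ k : ℕ, 1 ≤ k → g ^ k ≠ e

theorem periodic_of_not_infOrder (hinv : IsInverseMonoid M) (hperm : Permutable M)
    (hno : ¬ ∃ e g h : M, InfOrder e g h) (x : M) : IsPeriodicElem x := by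
  obtain ⟨n, hn2, hn⟩ := hperm
  obtain ⟨y, ⟨hxy, hyx⟩, -⟩ := hinv x
  have hc := pow_comm_inv hinv hxy hyx hn
  obtain ⟨h1, h2⟩ := inverse_pow hinv hxy hyx n
  have : ∃ k : ℕ, 1 ≤ k ∧ (x ^ n) ^ k = x ^ n * y ^ n := by
    by_contra hcon
    push Not at hcon
    refine hno ⟨x ^ n * y ^ n, x ^ n, y ^ n, h1, ?_, ?_, ?_, rfl, hc.symm, hcon⟩
    · rw [hc, h2]
    · rw [hc, ← mul_assoc, h1]
    · rw [← mul_assoc, h2]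
  obtain ⟨k, hk, hk'⟩ := this
  refine ⟨n, n * k + n, by omega, by nlinarith, ?_⟩
  rw [pow_add, pow_mul, hk', h1]

end Inv

/-! ### The automaton -/

theorem L1_of_infOrder {M : Type} [Monoid M] {e g h : M} (H : InfOrder e g h) :
    LangL1 ∈ LRat (Fin 2) M := by
  obtain ⟨eg, eh, ge, he, gh, hg, hinf⟩ := H
  have gkh : ∀ k, 1 ≤ k → g ^ k * h ^ k = e := by
    intro k hk
    induction k, hk using Nat.le_induction with
    | base => simpa using gh
    | succ k hk ih =>
      calc g ^ (k + 1) * h ^ (k + 1) = g * (g ^ k * h ^ k) * h := by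
            rw [pow_succ' g, pow_succ h]; simp only [mul_assoc]
        _ = e := by rw [ih, ge, gh]
  have gke : ∀ k, 1 ≤ k → g ^ k * e = g ^ k := by
    intro k hk
    obtain ⟨j, rfl⟩ := Nat.exists_eq_add_of_le' hk
    rw [pow_succ, mul_assoc, ge]
  have ehk : ∀ k, 1 ≤ k → e * h ^ k = h ^ k := by
    intro k hk
    obtain ⟨j, rfl⟩ := Nat.exists_eq_add_of_le' hk
    rw [pow_succ', ← mul_assoc, eh]
  have hne : ∀ k, 1 ≤ k → h ^ k ≠ e := by
    intro k hk hke
    have := gkh k hk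
    rw [hke, gke k hk] at this
    exact hinf k hk this
  have main : ∀ n k, 1 ≤ k → g ^ n * h ^ k = e → n = k := by
    intro n k hk hnk
    rcases lt_trichotomy n k with hlt | heq | hgt
    · exfalso
      obtain ⟨d, rfl⟩ := Nat.exists_eq_add_of_lt hlt
      rw [add_assoc, pow_add, ← mul_assoc] at hnk
      rcases Nat.eq_zero_or_pos n with rfl | hn
      · simp only [pow_zero, one_mul] at hnk
        exact hne (d + 1) (by omega) hnk
      · rw [gkh n hn, ehk _ (by omega)] at hnk
        exact hne (d + 1) (by omega) hnk
    · exact heq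
    · exfalso
      obtain ⟨d, rfl⟩ := Nat.exists_eq_add_of_lt hgt
      rw [show k + d + 1 = (d + 1) + k by omega, pow_add, mul_assoc, gkh k hk,
        gke _ (by omega)] at hnk
      exact hinf (d + 1) (by omega) hnk
  let A : RatMonoidAutomaton (Fin 2) M :=
    { Q := Bool
      fintypeQ := inferInstance
      start := false
      accept := {true}
      step := fun q o => { t |
        (q = false ∧ o = some 0 ∧ t = (false, g)) ∨ (o = some 1 ∧ t = (true, h)) }
      I0 := {1}
      I1 := {e}
      ratI0 := IsRatSet.of_finite _ (Set.finite_singleton _)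
      ratI1 := IsRatSet.of_finite _ (Set.finite_singleton _) }
  have hA : ∀ q w m q', A.Reaches q w m q' → q' = true →
      ∃ n k, w = List.replicate n 0 ++ List.replicate k 1 ∧ m = g ^ n * h ^ k ∧
        (q = true → n = 0) ∧ (q = false → 1 ≤ k) := by
    intro q w m q' hr
    induction hr with
    | refl q => intro hq; exact ⟨0, 0, by simp, by simp, by simp, by simp [hq]⟩
    | @letter q q' q'' a w m m' hs _ ih =>
      intro hq
      obtain ⟨n, k, h1, h2, h3, h4⟩ := ih hq
      rcases hs with ⟨hq1, ha, ht⟩ | ⟨ha, ht⟩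
      · simp only [Option.some.injEq] at ha
        obtain ⟨ht1, ht2⟩ := Prod.mk.inj ht
        refine ⟨n + 1, k, ?_, ?_, ?_, ?_⟩
        · rw [h1, ha]; rfl
        · rw [ht2, h2, pow_succ', mul_assoc]
        · intro h; rw [hq1] at h; cases h
        · intro _; exact h4 ht1
      · simp only [Option.some.injEq] at ha
        obtain ⟨ht1, ht2⟩ := Prod.mk.inj ht
        obtain rfl := h3 ht1
        refine ⟨0, k + 1, ?_, ?_, fun _ => rfl, fun _ => by omega⟩
        · rw [h1, ha]; rfl
        · rw [ht2, h2, pow_succ' h]; simp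
    | eps hs _ ih =>
      rcases hs with ⟨_, ha, _⟩ | ⟨ha, _⟩ <;> cases ha
  have hb : ∀ k, A.Reaches true (List.replicate k 1) (h ^ k) true := by
    intro k
    induction k with
    | zero => simpa using RatMonoidAutomaton.Reaches.refl (A := A) true
    | succ k ih =>
      rw [List.replicate_succ, pow_succ']
      exact RatMonoidAutomaton.Reaches.letter (Or.inr ⟨rfl, rfl⟩) ih
  have ha : ∀ n k, 1 ≤ k → A.Reaches false (List.replicate n 0 ++ List.replicate k 1)
      (g ^ n * h ^ k) true := by
    intro n k hk
    induction n with
    | zero =>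
      obtain ⟨j, rfl⟩ := Nat.exists_eq_add_of_le' hk
      rw [List.replicate_succ, pow_succ']
      simp only [List.replicate_zero, List.nil_append, pow_zero, one_mul]
      exact RatMonoidAutomaton.Reaches.letter (Or.inr ⟨rfl, rfl⟩) (hb j)
    | succ n ih =>
      rw [List.replicate_succ, pow_succ', mul_assoc]
      exact RatMonoidAutomaton.Reaches.letter (Or.inl ⟨rfl, rfl, rfl⟩) ih
  refine ⟨A, ?_⟩
  ext w
  constructor
  · rintro ⟨q, hq, m, hr, x0, hx0, hx⟩
    obtain ⟨n, k, h1, h2, -, h4⟩ := hA _ _ _ _ hr hq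
    have hk : 1 ≤ k := h4 rfl
    have hx0' : x0 = 1 := hx0
    have hx' : x0 * m = e := hx
    rw [hx0', one_mul, h2] at hx'
    obtain rfl := main n k hk hx'
    exact ⟨n, hk, h1⟩
  · rintro ⟨n, hn, rfl⟩
    refine ⟨true, rfl, _, ha n n hn, 1, rfl, ?_⟩
    rw [one_mul]
    exact gkh n hn

/-! ### The Burnside problem for permutable monoids (Restivo–Reutenauer) -/

section Burnside

theorem list_lt_append {A : Type} [LinearOrder A] : ∀ (u v s t : List A),
    u.length = v.length → u < v → u ++ s < v ++ t := by
  intro u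
  induction u with
  | nil => intro v s t hl h; cases v with
    | nil => exact absurd h (lt_irrefl _)
    | cons b v => simp at hl
  | cons a u ih =>
    intro v s t hl h
    cases v with
    | nil => simp at hl
    | cons b v =>
      rw [List.cons_append, List.cons_append, List.cons_lt_cons_iff]
      rw [List.cons_lt_cons_iff] at h
      rcases h with h | ⟨h1, h2⟩
      · exact Or.inl h
      · exact Or.inr ⟨h1, ih v s t (by simpa using hl) h2⟩

theorem list_append_lt {A : Type} [LinearOrder A] (p u v : List A) (h : u < v) :
    p ++ u < p ++ v := by
  induction p with
  | nil => simpa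
  | cons a p ih => rw [List.cons_append, List.cons_append, List.cons_lt_cons_iff]; exact Or.inr ⟨rfl, ih⟩

theorem flatten_perm_lt {A : Type} [LinearOrder A] {n : ℕ} (x : Fin n → List A)
    (hx : ∀ i j, i < j → ∀ s t, x i ++ s < x j ++ t) (σ : Equiv.Perm (Fin n)) (hσ : σ ≠ 1) :
    (List.ofFn x).flatten < (List.ofFn fun i => x (σ i)).flatten := by
  obtain ⟨k, hk, hlt⟩ := perm_first_moved σ hσ
  have htake : (List.ofFn x).take k = (List.ofFn fun i => x (σ i)).take k := by
    apply List.ext_getElem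
    · simp
    · intro i h1 h2
      have hik : i < k := by simp at h1; omega
      simp only [List.getElem_take, List.getElem_ofFn]
      rw [hk ⟨i, _⟩ hik]
  rw [← List.take_append_drop k (List.ofFn x),
    ← List.take_append_drop k (List.ofFn fun i => x (σ i)), ← htake,
    List.flatten_append, List.flatten_append]
  apply list_append_lt
  rw [List.drop_eq_getElem_cons (l := List.ofFn x) (by simp),
    List.drop_eq_getElem_cons (l := List.ofFn fun i => x (σ i)) (by simp),
    List.flatten_cons, List.flatten_cons]
  simp only [List.getElem_ofFn, Fin.eta]
  exact hx _ _ hlt _ _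

/-- compactness of the space of infinite words -/
theorem exists_limit_word {A : Type} [Finite A] (u : ℕ → ℕ → A) :
    ∃ z : ℕ → A, ∀ L N : ℕ, ∃ i, N ≤ i ∧ ∀ j < L, u i j = z j := by
  have h : ∀ j, ∃ a, ∀ᶠ i in (Filter.hyperfilter ℕ : Filter ℕ), u i j = a := by
    intro j
    have : ∀ᶠ i in (Filter.hyperfilter ℕ : Filter ℕ), ∃ a ∈ (Set.univ : Set A), u i j = a := by simp
    rw [Ultrafilter.eventually_exists_mem_iff Set.finite_univ] at this
    obtain ⟨a, -, ha⟩ := this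
    exact ⟨a, ha⟩
  choose z hz using h
  refine ⟨z, fun L N => ?_⟩
  have h1 : ∀ᶠ i in (Filter.hyperfilter ℕ : Filter ℕ), ∀ j ∈ Set.Iio L, u i j = z j :=
    (Filter.eventually_all_finite (Set.finite_Iio L)).2 fun j _ => hz j
  have h2 : ∀ᶠ i in (Filter.hyperfilter ℕ : Filter ℕ), N ≤ i := by
    apply Filter.hyperfilter_le_cofinite
    rw [Nat.cofinite_eq_atTop]
    exact Filter.eventually_ge_atTop N
  obtain ⟨i, hi1, hi2⟩ := (h1.and h2).exists
  exact ⟨i, hi2, fun j hj => hi1 j hj⟩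

/-- the factor of length `l` at position `i` of an infinite word -/
def seg {A : Type} (w : ℕ → A) (i l : ℕ) : List A := (List.range l).map fun j => w (i + j)

theorem seg_length {A : Type} (w : ℕ → A) (i l : ℕ) : (seg w i l).length = l := by simp [seg]

theorem seg_add {A : Type} (w : ℕ → A) (i l m : ℕ) :
    seg w i (l + m) = seg w i l ++ seg w (i + l) m := by
  simp [seg, List.range_add, add_assoc]

theorem seg_congr {A : Type} (w z : ℕ → A) (i k l : ℕ) (h : ∀ j < l, w (i + j) = z (k + j)) :
    seg w i l = seg z k l := by
  apply List.map_congr_left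
  intro j hj
  exact h j (by simpa using hj)

theorem seg_eq_iff {A : Type} (w z : ℕ → A) (i k l : ℕ) :
    seg w i l = seg z k l ↔ ∀ j < l, w (i + j) = z (k + j) := by
  refine ⟨fun h j hj => ?_, seg_congr w z i k l⟩
  have := List.map_inj_left.1 h j (by simpa using hj)
  exact this

theorem seg_flatten {A : Type} (w : ℕ → A) (p : ℕ → ℕ) (hp : ∀ i, p i ≤ p (i + 1)) (n : ℕ) :
    (List.ofFn fun i : Fin n => seg w (p i) (p (i + 1) - p i)).flatten = seg w (p 0) (p n - p 0) := by
  induction n with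
  | zero => simp [seg]
  | succ n ih =>
    rw [List.ofFn_succ', List.concat_eq_append, List.flatten_append]
    simp only [Fin.val_castSucc, Fin.val_last, List.flatten_singleton]
    rw [ih]
    have h0 : p 0 ≤ p n := monotone_nat_of_le_succ hp (Nat.zero_le n)
    have h1 := hp n
    have : p (n + 1) - p 0 = (p n - p 0) + (p (n + 1) - p n) := by omega
    rw [this, seg_add]
    congr 2
    omega

variable {M : Type} [Monoid M] {A : Type} [LinearOrder A]

/-- evaluation of a word in the monoid -/
def evalW (f : A → M) (w : List A) : M := (w.map f).prod

theorem evalW_append (f : A → M) (u v : List A) : evalW f (u ++ v) = evalW f u * evalW f v := by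
  simp [evalW]

theorem evalW_flatten (f : A → M) (l : List (List A)) :
    evalW f l.flatten = (l.map (evalW f)).prod := by
  induction l with
  | nil => simp [evalW]
  | cons a l ih => simp [evalW_append, ih]

/-- reduced words: shortest, and lexicographically largest among the shortest ones -/
def Red (f : A → M) (w : List A) : Prop :=
  ∀ v, evalW f v = evalW f w → w.length ≤ v.length ∧ (v.length = w.length → v ≤ w)

theorem Red.factor {f : A → M} {p u s : List A} (h : Red f (p ++ u ++ s)) : Red f u := by
  intro v hv
  obtain ⟨h1, h2⟩ := h (p ++ v ++ s) (by simp only [evalW_append, hv])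
  simp only [List.length_append] at h1 h2
  refine ⟨by omega, fun hl => ?_⟩
  by_contra hlt
  rw [not_le] at hlt
  have h3 := h2 (by omega)
  rw [List.append_assoc, List.append_assoc] at h3
  exact absurd h3 (not_le.2 (list_append_lt _ _ _ (list_lt_append _ _ _ _ hl.symm hlt)))

theorem exists_red [Finite A] (f : A → M) (w : List A) : ∃ v, evalW f v = evalW f w ∧ Red f v := by
  classical
  have hex : ∃ l, ∃ v : List A, evalW f v = evalW f w ∧ v.length = l := ⟨_, w, rfl, rfl⟩
  have hfin : {v : List A | evalW f v = evalW f w ∧ v.length = Nat.find hex}.Finite :=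
    (List.finite_length_eq A (Nat.find hex)).subset fun v hv => hv.2
  obtain ⟨v, hv, hmax⟩ := Set.exists_max_image _ id hfin (Nat.find_spec hex)
  refine ⟨v, hv.1, fun u hu => ⟨?_, fun hl => ?_⟩⟩
  · rw [hv.2]
    exact Nat.find_min' hex ⟨u, hu.trans hv.1, rfl⟩
  · exact hmax u ⟨hu.trans hv.1, hl.trans hv.2⟩

theorem exists_red_length [Finite A] (f : A → M) (hf : Function.Surjective (evalW f))
    [Infinite M] (N : ℕ) : ∃ v, Red f v ∧ v.length = N := by
  have : ∃ v, Red f v ∧ N ≤ v.length := by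
    by_contra hcon
    push Not at hcon
    have hfin : (evalW f '' {v : List A | v.length < N}).Finite :=
      (List.finite_length_lt A N).image _
    apply Set.infinite_univ (α := M)
    refine hfin.subset fun m _ => ?_
    obtain ⟨w, rfl⟩ := hf m
    obtain ⟨v, hv, hr⟩ := exists_red f w
    exact ⟨v, hcon v hr, hv⟩
  obtain ⟨v, hr, hl⟩ := this
  refine ⟨v.take N, ?_, by simpa using hl⟩
  apply Red.factor (p := []) (s := v.drop N)
  simpa using hr

theorem burnside [Finite A] (f : A → M) (hf : Function.Surjective (evalW f))
    {n : ℕ} (hn : NPermutable M n) (hper : ∀ x : M, IsPeriodicElem x) : Finite M := by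
  classical
  by_contra hinf
  rw [not_finite_iff_infinite] at hinf
  -- an infinite word all of whose factors are reduced
  have hA : Nonempty A := by
    obtain ⟨v, -, hv⟩ := exists_red_length f hf 1
    cases v with
    | nil => simp at hv
    | cons a _ => exact ⟨a⟩
  obtain ⟨w, hw⟩ : ∃ w : ℕ → A, ∀ i l, Red f (seg w i l) := by
    choose v hv1 hv2 using exists_red_length f hf
    obtain ⟨w, hw⟩ := exists_limit_word fun i j => (v i).getD j (Classical.arbitrary A)
    refine ⟨w, fun i l => ?_⟩
    obtain ⟨N, hN, hag⟩ := hw (i + l) (i + l)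
    have hpre : seg w 0 (i + l) = (v N).take (i + l) := by
      apply List.ext_getElem
      · simp [seg_length, hv2, hN]
      · intro j h1 h2
        rw [seg_length] at h1
        have := hag j h1
        rw [List.getD_eq_getElem _ _ (by rw [hv2]; omega)] at this
        simp [seg, this]
    have hr : Red f (seg w 0 (i + l)) := by
      rw [hpre]
      apply Red.factor (p := []) (s := (v N).drop (i + l))
      simpa using hv1 N
    rw [seg_add, zero_add] at hr
    apply Red.factor (s := []) (p := seg w 0 i)
    simpa using hr
  -- its limit set
  set Ω : Set (ℕ → A) := {z | ∀ L N : ℕ, ∃ i, N ≤ i ∧ ∀ j < L, w (i + j) = z j} with hΩ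
  obtain ⟨z, hz⟩ : ∃ z, z ∈ Ω := exists_limit_word fun i j => w (i + j)
  have hshift : ∀ k, (fun j => z (k + j)) ∈ Ω := by
    intro k L N
    obtain ⟨i, hi, h⟩ := hz (k + L) N
    exact ⟨i + k, by omega, fun j hj => by rw [add_assoc]; exact h (k + j) (by omega)⟩
  have hzred : ∀ i l, Red f (seg z i l) := by
    intro i l
    obtain ⟨N, -, h⟩ := hz (i + l) 0
    rw [← seg_congr w z (N + i) i l fun j hj => by rw [add_assoc]; exact h (i + j) (by omega)]
    exact hw _ _
  by_cases hfin : Ω.Finite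
  · -- `z` is eventually periodic
    have : Finite Ω := hfin
    obtain ⟨i, j, hij, heq⟩ := Finite.exists_ne_map_eq_of_infinite
      (fun k : ℕ => (⟨fun j => z (k + j), hshift k⟩ : Ω))
    have heq' : ∀ t, z (i + t) = z (j + t) := fun t => congrFun (Subtype.mk.inj heq) t
    obtain ⟨a, d, hd, hp⟩ : ∃ a d, 1 ≤ d ∧ ∀ t, z (a + t) = z (a + d + t) := by
      rcases lt_or_gt_of_ne hij with h | h
      · exact ⟨i, j - i, by omega, fun t => by rw [heq']; congr 1; omega⟩
      · exact ⟨j, i - j, by omega, fun t => by rw [← heq']; congr 1; omega⟩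
    have hpow : ∀ p, evalW f (seg z a (p * d)) = evalW f (seg z a d) ^ p := by
      intro p
      induction p with
      | zero => simp [seg, evalW]
      | succ p ih =>
        rw [Nat.succ_mul, add_comm, seg_add, evalW_append, pow_succ', ← ih,
          seg_congr z z (a + d) a (p * d) fun t _ => (hp t).symm]
    obtain ⟨p, q, -, hpq, h⟩ := hper (evalW f (seg z a d))
    rw [← hpow, ← hpow] at h
    have := (hzred a (q * d) _ h).1
    rw [seg_length, seg_length] at this
    have : p * d < q * d := Nat.mul_lt_mul_of_pos_right hpq hd
    omega
  · -- `w` has an `n`-divided factor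
    obtain ⟨T, hT, hTn⟩ := Set.Infinite.exists_subset_card_eq hfin n
    have hdist : ∃ L, Set.InjOn (fun z : ℕ → A => seg z 0 L) T := by
      have : ∀ a b : ℕ → A, ∃ l, a ≠ b → a l ≠ b l := by
        intro a b
        by_cases h : a = b
        · exact ⟨0, fun h' => absurd h h'⟩
        · obtain ⟨l, hl⟩ := Function.ne_iff.1 h
          exact ⟨l, fun _ => hl⟩
      choose l hl using this
      refine ⟨(T ×ˢ T).sup (fun p => l p.1 p.2) + 1, fun a ha b hb hab => ?_⟩
      by_contra hne
      have hle : l a b ≤ (T ×ˢ T).sup (fun p => l p.1 p.2) :=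
        Finset.le_sup (f := fun p : (ℕ → A) × (ℕ → A) => l p.1 p.2) (b := (a, b))
          (Finset.mem_product.2 ⟨ha, hb⟩)
      have := (seg_eq_iff a b 0 0 _).1 hab (l a b) (by omega)
      rw [zero_add] at this
      exact hl a b hne this
    obtain ⟨L, hL⟩ := hdist
    set F := T.image fun z => seg z 0 L with hF
    have hFn : F.card = n := by rw [hF, Finset.card_image_of_injOn hL, hTn]
    let g := F.orderEmbOfFin hFn
    have hrec : ∀ k N : ℕ, ∃ i, N ≤ i ∧ ∀ h : k < n, seg w i L = g ⟨k, h⟩ := by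
      intro k N
      by_cases h : k < n
      · have hmem := Finset.orderEmbOfFin_mem F hFn ⟨k, h⟩
        obtain ⟨y, hy, hyk⟩ := Finset.mem_image.1 hmem
        obtain ⟨i, hi, hag⟩ := hT hy L N
        refine ⟨i, hi, fun _ => ?_⟩
        rw [seg_congr w y i 0 L fun j hj => by rw [zero_add]; exact hag j hj]
        exact hyk
      · exact ⟨N, le_rfl, fun h' => absurd h' h⟩
    choose Q hQ1 hQ2 using hrec
    let p : ℕ → ℕ := fun k => Nat.rec (Q 0 0) (fun k r => Q (k + 1) (r + L)) k
    have hp : ∀ k, p k + L ≤ p (k + 1) := fun k => hQ1 (k + 1) (p k + L)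
    have hpg : ∀ k (h : k < n), seg w (p k) L = g ⟨k, h⟩ := by
      intro k h
      cases k with
      | zero => exact hQ2 0 0 h
      | succ k => exact hQ2 (k + 1) (p k + L) h
    let x : Fin n → List A := fun i => seg w (p i) (p (i + 1) - p i)
    have hx : ∀ i j, i < j → ∀ s t, x i ++ s < x j ++ t := by
      intro i j hij s t
      have hs : ∀ i : Fin n, x i = g i ++ seg w (p i + L) (p (i + 1) - p i - L) := by
        intro i
        have h1 := hp i
        have h2 := hpg i i.2
        rw [Fin.eta] at h2
        rw [← h2, ← seg_add]
        show seg _ _ _ = _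
        congr 1
        omega
      rw [hs, hs, List.append_assoc, List.append_assoc]
      apply list_lt_append
      · rw [← hpg i i.2, ← hpg j j.2, seg_length, seg_length]
      · exact g.strictMono hij
    obtain ⟨σ, hσ, hprod⟩ := hn fun i => evalW f (x i)
    have hlt := flatten_perm_lt x hx σ hσ
    have hflat := seg_flatten w p (fun i => by have := hp i; omega) n
    have hred : Red f (List.ofFn x).flatten := by
      have := hw (p 0) (p n - p 0)
      rw [← hflat] at this
      exact this
    have hev : evalW f (List.ofFn fun i => x (σ i)).flatten = evalW f (List.ofFn x).flatten := by
      rw [evalW_flatten, evalW_flatten, List.map_ofFn, List.map_ofFn]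
      exact hprod.symm
    have hlen : (List.ofFn fun i => x (σ i)).flatten.length = (List.ofFn x).flatten.length := by
      rw [List.length_flatten, List.length_flatten, List.map_ofFn, List.map_ofFn,
        List.sum_ofFn, List.sum_ofFn]
      exact Equiv.sum_comp σ fun i => (x i).length
    exact absurd ((hred _ hev).2 hlen) (not_le.2 hlt)

end Burnside

/-- Let `M` be a finitely generated inverse permutable monoid. If `M` has
an infinite subgroup, then `L₁ = {aⁿbⁿ : n ≥ 1}` belongs to `𝔏_Rat(M)`. -/
theorem L1_mem_LRat_of_infinite_subgroup
    (M : Type) [Monoid M] (hfg : Monoid.FG M) (hinv : IsInverseMonoid M)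
    (hperm : Permutable M)
    (hinf : ∃ S : Subsemigroup M, IsSubgroupOfMonoid S ∧ (S : Set M).Infinite) :
    LangL1 ∈ LRat (Fin 2) M := by
  by_cases hex : ∃ e g h : M, InfOrder e g h
  · obtain ⟨e, g, h, H⟩ := hex
    exact L1_of_infOrder H
  · exfalso
    have hper := periodic_of_not_infOrder hinv hperm hex
    obtain ⟨n, -, hn⟩ := hperm
    obtain ⟨T, hT⟩ := hfg.fg_top
    have hsurj : Function.Surjective (evalW fun i : Fin T.card => (T.equivFin.symm i : M)) := by
      intro m
      have hm : m ∈ Submonoid.closure (T : Set M) := by rw [hT]; trivial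
      induction hm using Submonoid.closure_induction with
      | mem x hx => exact ⟨[T.equivFin ⟨x, hx⟩], by simp [evalW]⟩
      | one => exact ⟨[], by simp [evalW]⟩
      | mul x y _ _ hx hy =>
        obtain ⟨u, rfl⟩ := hx
        obtain ⟨v, rfl⟩ := hy
        exact ⟨u ++ v, evalW_append _ _ _⟩
    have := burnside _ hsurj hn hper
    obtain ⟨S, -, hS⟩ := hinf
    exact hS (Set.toFinite _)
end

section
/- Let M be a monoid. Then at least one of the following holds: (i) 𝔏(Val,CF,M) equals the class of context-free languages; (ii) 𝔏(Val,CF,M) contains 𝔏(Val,CF,B), where B is the bicyclic monoid; (iii) 𝔏(Val,CF,M) contains 𝔏(Val,CF,ℤ); (iv) 𝔏(Val,CF,M) = 𝔏(Val,CF,G) for some infinite periodic group G which is not locally finite. -/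
/-- A context-free valence grammar over a monoid `M` with terminal alphabet `T`:
a context-free grammar (finitely many nonterminals, finitely many rules) each of whose
rules `(A, α, m)` rewrites the nonterminal `A` to the string `α ∈ (N ∪ T)*` and carries
the valence `m ∈ M`. -/
structure CFValenceGrammar (T : Type) (M : Type) [Monoid M] where
  NT : Type
  fintypeNT : Fintype NT
  start : NT
  rules : List (NT × List (NT ⊕ T) × M)

namespace CFValenceGrammar

variable {T M : Type} [Monoid M]

/-- One derivation step on pairs (sentential form, accumulated valence). -/
def Produces (G : CFValenceGrammar T M)
    (x y : List (G.NT ⊕ T) × M) : Prop :=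
  ∃ r ∈ G.rules, ∃ u v : List (G.NT ⊕ T),
    x.1 = u ++ Sum.inl r.1 :: v ∧ y.1 = u ++ r.2.1 ++ v ∧ y.2 = x.2 * r.2.2

/-- The derivation relation: the reflexive-transitive closure of `Produces`. -/
def Derives (G : CFValenceGrammar T M) :
    List (G.NT ⊕ T) × M → List (G.NT ⊕ T) × M → Prop :=
  Relation.ReflTransGen G.Produces

/-- The language generated by a context-free valence grammar: terminal words derivable
from the start symbol by a valid derivation, i.e. one whose product of valences is the
identity. -/
def lang (G : CFValenceGrammar T M) : Language T :=
  { w | G.Derives ([Sum.inl G.start], 1) (w.map Sum.inr, 1) }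

end CFValenceGrammar

/-- `𝔏(Val, CF, M)`: the family of languages over the terminal alphabet `T` generated by
context-free valence grammars over `M`. -/
def LValCF (T : Type) (M : Type) [Monoid M] : Set (Language T) :=
  { L | ∃ G : CFValenceGrammar T M, G.lang = L }

/-- The map `P_x : u ↦ ux` on `X*`, as an everywhere-defined map on `Option (X*)`
(where `none` encodes "undefined"). -/
def polyP (X : Type) (x : X) : Function.End (Option (List X)) :=
  fun u => u.map fun v => v ++ [x]

/-- The partial map `Q_x : ux ↦ u` on `X*`, as a map on `Option (X*)`. -/
def polyQ (X : Type) [DecidableEq X] (x : X) : Function.End (Option (List X)) :=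
  fun u => u.bind fun v => if v.getLast? = some x then some v.dropLast else none

/-- The polycyclic monoid on the alphabet `X`: the submonoid of the monoid of partial
functions on `X*` (encoded as total functions on `Option (X*)`) generated by the maps
`P_x` and `Q_x` for `x ∈ X`. -/
def PolycyclicMonoid (X : Type) [DecidableEq X] :
    Submonoid (Function.End (Option (List X))) :=
  Submonoid.closure (Set.range (polyP X) ∪ Set.range (polyQ X))

/-- The bicyclic monoid `B = ⟨p, q ∣ pq = 1⟩`: the polycyclic monoid on a one-letter
alphabet. -/
abbrev BicyclicMonoid : Type := ↥(PolycyclicMonoid (Fin 1))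

namespace VG

/-- `Shf u v y`: the word `y` is a shuffle of `u` and `v`. -/
inductive Shf {H : Type} : List H → List H → List H → Prop
  | nil : Shf [] [] []
  | left (a : H) {u v y : List H} : Shf u v y → Shf (a :: u) v (a :: y)
  | right (a : H) {u v y : List H} : Shf u v y → Shf u (a :: v) (a :: y)

section shuffle
variable {H : Type}

theorem Shf.nil_left : ∀ v : List H, Shf [] v v
  | [] => .nil
  | a :: v => .right a (Shf.nil_left v)

theorem Shf.comm {u v y : List H} (h : Shf u v y) : Shf v u y := by
  induction h with
  | nil => exact .nil
  | left a _ ih => exact .right a ih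
  | right a _ ih => exact .left a ih

theorem Shf.nil_right (v : List H) : Shf v [] v := (Shf.nil_left v).comm

theorem Shf.eq_of_nil_left {v y : List H} (h : Shf [] v y) : y = v := by
  generalize hu : ([] : List H) = u at h
  induction h with
  | nil => rfl
  | left a _ ih => cases hu
  | right a _ ih => rw [ih hu]

theorem Shf.append {u v y u' v' y' : List H} (h : Shf u v y) (h' : Shf u' v' y') :
    Shf (u ++ u') (v ++ v') (y ++ y') := by
  induction h with
  | nil => exact h'
  | left a _ ih => exact .left a ih
  | right a _ ih => exact .right a ih

theorem Shf.assoc {u v x z y : List H} (h : Shf u v x) (h' : Shf x z y) :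
    ∃ t, Shf v z t ∧ Shf u t y := by
  induction h' generalizing u v with
  | nil => cases h; exact ⟨[], .nil, .nil⟩
  | left a h1 ih =>
    cases h with
    | left _ h2 =>
      obtain ⟨t, ht1, ht2⟩ := ih h2
      exact ⟨t, ht1, .left a ht2⟩
    | right _ h2 =>
      obtain ⟨t, ht1, ht2⟩ := ih h2
      exact ⟨a :: t, .left a ht1, .right a ht2⟩
  | right a h1 ih =>
    obtain ⟨t, ht1, ht2⟩ := ih h
    exact ⟨a :: t, .right a ht1, .right a ht2⟩

theorem Shf.assoc' {u v t z y : List H} (h : Shf v z t) (h' : Shf u t y) :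
    ∃ x, Shf u v x ∧ Shf x z y := by
  obtain ⟨x, h1, h2⟩ := h.comm.assoc h'.comm
  exact ⟨x, h1.comm, h2.comm⟩

theorem Shf.split {u z y a b : List H} (h : Shf u z y) (hu : u = a ++ b) :
    ∃ z1 z2 y1 y2, z = z1 ++ z2 ∧ y = y1 ++ y2 ∧ Shf a z1 y1 ∧ Shf b z2 y2 := by
  induction h generalizing a b with
  | nil =>
    obtain ⟨rfl, rfl⟩ := List.append_eq_nil_iff.1 hu.symm
    exact ⟨[], [], [], [], rfl, rfl, .nil, .nil⟩
  | @left c u z y h ih =>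
    cases a with
    | nil =>
      subst hu
      exact ⟨[], z, [], c :: y, rfl, rfl, .nil, .left c h⟩
    | cons d a =>
      simp only [List.cons_append, List.cons.injEq] at hu
      obtain ⟨rfl, hu⟩ := hu
      obtain ⟨z1, z2, y1, y2, rfl, rfl, h1, h2⟩ := ih hu
      exact ⟨z1, z2, c :: y1, y2, rfl, rfl, .left c h1, h2⟩
  | @right c u z y h ih =>
    obtain ⟨z1, z2, y1, y2, rfl, rfl, h1, h2⟩ := ih hu
    exact ⟨c :: z1, z2, c :: y1, y2, rfl, rfl, .right c h1, h2⟩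

theorem Shf.split_cons {h : H} {u z y : List H} (hs : Shf (h :: u) z y) :
    ∃ z1 z2 y2, z = z1 ++ z2 ∧ y = z1 ++ h :: y2 ∧ Shf u z2 y2 := by
  generalize hc : h :: u = c at hs
  induction hs with
  | nil => cases hc
  | @left a u' z y hs ih =>
    cases hc
    exact ⟨[], z, y, rfl, rfl, hs⟩
  | right a hs ih =>
    obtain ⟨z1, z2, y2, rfl, rfl, h2⟩ := ih hc
    exact ⟨a :: z1, z2, y2, rfl, rfl, h2⟩

/-- Insertion order: one inserts factors with product `1`. -/
def Le [Monoid H] : List H → List H → Prop :=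
  Relation.ReflTransGen fun u v => ∃ a w b : List H, w.prod = 1 ∧ u = a ++ b ∧ v = a ++ w ++ b

variable [Monoid H]

theorem Le.refl (u : List H) : Le u u := Relation.ReflTransGen.refl

theorem Le.trans {u v w : List H} (h : Le u v) (h' : Le v w) : Le u w :=
  Relation.ReflTransGen.trans h h'

theorem Le.single {a w b : List H} (h : w.prod = 1) : Le (a ++ b) (a ++ w ++ b) :=
  Relation.ReflTransGen.single ⟨a, w, b, h, rfl, rfl⟩

theorem Le.cons (h : H) {u v : List H} (huv : Le u v) : Le (h :: u) (h :: v) := by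
  induction huv with
  | refl => exact Le.refl _
  | tail _ h2 ih =>
    obtain ⟨a, w, b, hw, rfl, rfl⟩ := h2
    exact ih.trans (Le.single (a := h :: a) hw)

theorem Le.prod_eq {u v : List H} (huv : Le u v) : u.prod = v.prod := by
  induction huv with
  | refl => rfl
  | tail _ h2 ih =>
    obtain ⟨a, w, b, hw, rfl, rfl⟩ := h2
    rw [ih]; simp [hw]

theorem Le.shf {u v z y : List H} (huv : Le u v) (h : Shf u z y) :
    ∃ y', Shf v z y' ∧ Le y y' := by
  induction huv with
  | refl => exact ⟨y, h, Le.refl _⟩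
  | tail _ h2 ih =>
    obtain ⟨y', h3, h4⟩ := ih
    obtain ⟨a, w, b, hw, rfl, rfl⟩ := h2
    obtain ⟨z1, z2, y1, y2, rfl, rfl, h5, h6⟩ := h3.split rfl
    refine ⟨y1 ++ w ++ y2, ?_, h4.trans (Le.single hw)⟩
    simpa using (h5.append (Shf.nil_right w)).append h6

/-! Tagged words. -/

def lf : List (H ⊕ H) → List H := List.filterMap (Sum.elim some fun _ => none)
def rt : List (H ⊕ H) → List H := List.filterMap (Sum.elim (fun _ => none) some)
def mg : List (H ⊕ H) → List H := List.map (Sum.elim id id)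

theorem shf_iff {u z y : List H} : Shf u z y ↔ ∃ l, lf l = u ∧ rt l = z ∧ mg l = y := by
  constructor
  · intro h
    induction h with
    | nil => exact ⟨[], rfl, rfl, rfl⟩
    | left a _ ih =>
      obtain ⟨l, rfl, rfl, rfl⟩ := ih
      exact ⟨.inl a :: l, rfl, rfl, rfl⟩
    | right a _ ih =>
      obtain ⟨l, rfl, rfl, rfl⟩ := ih
      exact ⟨.inr a :: l, rfl, rfl, rfl⟩
  · rintro ⟨l, rfl, rfl, rfl⟩
    induction l with
    | nil => exact .nil
    | cons a l ih =>
      cases a with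
      | inl a => exact .left a ih
      | inr a => exact .right a ih

theorem exists_prefix (l : List (H ⊕ H)) (i : ℕ) (hi : i ≤ (lf l).length) :
    ∃ a, a <+: l ∧ (lf a).length = i := by
  induction l generalizing i with
  | nil => exact ⟨[], List.nil_prefix, by simp [lf] at hi ⊢; omega⟩
  | cons c l ih =>
    cases c with
    | inl c =>
      cases i with
      | zero => exact ⟨[], List.nil_prefix, rfl⟩
      | succ i =>
        obtain ⟨a, h1, h2⟩ := ih i (by simpa [lf] using hi)
        exact ⟨.inl c :: a, by simpa using h1, by simpa [lf] using h2⟩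
    | inr c =>
      obtain ⟨a, h1, h2⟩ := ih i hi
      exact ⟨.inr c :: a, by simpa using h1, h2⟩

end shuffle

section shorten
variable {H : Type} [Group H] [Fintype H]

theorem shorten_step {v z y : List H} (h : Shf v z y) (hv : Fintype.card (H × H) ≤ v.length) :
    ∃ u, Le u v ∧ u.length < v.length ∧ ∃ y', Shf u z y' ∧ y'.prod = y.prod := by
  obtain ⟨l, rfl, rfl, rfl⟩ := shf_iff.1 h
  have hp : ∀ i : Fin ((lf l).length + 1), ∃ a, a <+: l ∧ (lf a).length = i :=
    fun i => exists_prefix l i (by omega)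
  choose a ha1 ha2 using hp
  obtain ⟨i, j, hij, hk⟩ := Fintype.exists_ne_map_eq_of_card_lt
    (fun i => ((lf (a i)).prod, (mg (a i)).prod * (rt (a i)).prod⁻¹)) (by simpa using Nat.lt_succ_of_le hv)
  wlog hlt : i < j generalizing i j
  · exact this j i hij.symm hk.symm (lt_of_le_of_ne (not_lt.1 hlt) hij.symm)
  have hpre : a i <+: a j := by
    rcases List.prefix_or_prefix_of_prefix (ha1 i) (ha1 j) with h | h
    · exact h
    · obtain ⟨m, hm⟩ := h
      have := congrArg (fun x => (lf x).length) hm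
      simp [lf] at this
      have h1 := ha2 i
      have h2 := ha2 j
      simp only [lf] at h1 h2
      have : (i : ℕ) < j := hlt
      omega
  obtain ⟨m, hm⟩ := hpre
  obtain ⟨b, hb⟩ := ha1 j
  have hlen : (lf m).length ≠ 0 := by
    have := congrArg (fun x => (lf x).length) hm
    simp [lf] at this
    have h1 := ha2 i
    have h2 := ha2 j
    simp only [lf] at h1 h2 ⊢
    have : (i : ℕ) < j := hlt
    omega
  have e1 : ∀ x y : List (H ⊕ H), lf (x ++ y) = lf x ++ lf y := by simp [lf]
  have e2 : ∀ x y : List (H ⊕ H), rt (x ++ y) = rt x ++ rt y := by simp [rt]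
  have e3 : ∀ x y : List (H ⊕ H), mg (x ++ y) = mg x ++ mg y := by simp [mg]
  rw [Prod.mk.injEq, ← hm, e1, e2, e3] at hk
  simp only [List.prod_append, mul_inv_rev] at hk
  obtain ⟨hk1, hk2⟩ := hk
  have hw : (lf m).prod = 1 := by simpa using hk1
  have hmz : (mg m).prod = (rt m).prod := by
    have : (rt (a i)).prod⁻¹ = (mg m).prod * ((rt m).prod⁻¹ * (rt (a i)).prod⁻¹) := by
      have := hk2
      rw [mul_assoc] at this
      exact mul_left_cancel this
    rw [← mul_assoc] at this
    have h3 : (mg m).prod * (rt m).prod⁻¹ = 1 := by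
      simpa using this
    exact mul_inv_eq_one.1 h3
  rw [← hm] at hb
  rw [← hb]
  refine ⟨lf (a i) ++ lf b, ?_, ?_, mg (a i) ++ rt m ++ mg b, ?_, ?_⟩
  · rw [e1, e1]; exact Le.single hw
  · rw [e1, e1]; simp only [List.length_append]; omega
  · rw [e2, e2]
    have h1 : Shf (lf (a i)) (rt (a i)) (mg (a i)) := shf_iff.2 ⟨_, rfl, rfl, rfl⟩
    have h2 : Shf (lf b) (rt b) (mg b) := shf_iff.2 ⟨_, rfl, rfl, rfl⟩
    simpa using (h1.append (Shf.nil_left (rt m))).append h2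
  · rw [e3, e3]; simp [hmz]

theorem shorten {v z y : List H} (h : Shf v z y) :
    ∃ u, Le u v ∧ u.length ≤ Fintype.card (H × H) ∧ ∃ y', Shf u z y' ∧ y'.prod = y.prod := by
  induction hn : v.length using Nat.strong_induction_on generalizing v y with
  | _ n ih =>
    by_cases hv : v.length ≤ Fintype.card (H × H)
    · exact ⟨v, Le.refl _, hv, y, h, rfl⟩
    · obtain ⟨u, h1, h2, y', h3, h4⟩ := shorten_step h (by omega)
      obtain ⟨u', h5, h6, y'', h7, h8⟩ := ih _ (hn ▸ h2) h3 rfl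
      exact ⟨u', h5.trans h1, h6, y'', h7, h8.trans h4⟩

end shorten

section der
variable {N T H : Type}

/-- Derivation forests with a chosen linearization of the valences. -/
inductive Der (R : Set (N × List (N ⊕ T) × H)) : List (N ⊕ T) → List H → List T → Prop
  | nil : Der R [] [] []
  | term (t : T) {α v w} : Der R α v w → Der R (.inr t :: α) v (t :: w)
  | nonterm {A rhs h α v1 w1 v2 w2 v} : (A, rhs, h) ∈ R → Der R rhs v1 w1 → Der R α v2 w2 →
      Shf (h :: v1) v2 v → Der R (.inl A :: α) v (w1 ++ w2)

inductive Steps (R : Set (N × List (N ⊕ T) × H)) :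
    List (N ⊕ T) → List H → List (N ⊕ T) → Prop
  | refl (α) : Steps R α [] α
  | head {A rhs h} (p q : List (N ⊕ T)) {s y} : (A, rhs, h) ∈ R → Steps R (p ++ rhs ++ q) s y →
      Steps R (p ++ .inl A :: q) (h :: s) y

variable {R : Set (N × List (N ⊕ T) × H)}

theorem Steps.shf {α1 α2 β1 β2 : List (N ⊕ T)} {s1 s2 s : List H} (h : Shf s1 s2 s)
    (h1 : Steps R α1 s1 β1) (h2 : Steps R α2 s2 β2) : Steps R (α1 ++ α2) s (β1 ++ β2) := by
  induction h generalizing α1 α2 with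
  | nil => cases h1; cases h2; exact .refl _
  | left a _ ih =>
    cases h1 with
    | head p q hr h3 =>
      have := ih h3 h2
      have := Steps.head p (q ++ α2) hr (by simpa using this)
      simpa using this
  | right a _ ih =>
    cases h2 with
    | head p q hr h3 =>
      have := ih h1 h3
      have := Steps.head (α1 ++ p) q hr (by simpa using this)
      simpa using this

theorem Der.steps {α : List (N ⊕ T)} {v : List H} {w : List T} (h : Der R α v w) :
    Steps R α v (w.map .inr) := by
  induction h with
  | nil => exact .refl _
  | term t _ ih => exact Steps.shf (Shf.nil_left _) (Steps.refl [.inr t]) ih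
  | @nonterm A rhs h α v1 w1 v2 w2 v hr _ _ hs ih1 ih2 =>
    have : Steps R [.inl A] (h :: v1) (w1.map .inr) := Steps.head [] [] hr (by simpa using ih1)
    simpa using Steps.shf hs this ih2

theorem Der.terminals : ∀ w : List T, Der R (w.map .inr) [] w
  | [] => .nil
  | t :: w => .term t (Der.terminals w)

theorem Der.append {α β : List (N ⊕ T)} {v1 v2 v : List H} {w1 w2 : List T}
    (h1 : Der R α v1 w1) (h2 : Der R β v2 w2) (h : Shf v1 v2 v) :
    Der R (α ++ β) v (w1 ++ w2) := by
  induction h1 generalizing v with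
  | nil => rw [h.eq_of_nil_left]; exact h2
  | term t _ ih => exact .term t (ih h)
  | nonterm hr ha hb hs ih1 ih2 =>
    obtain ⟨t, ht1, ht2⟩ := hs.assoc h
    rw [List.append_assoc]
    exact .nonterm hr ha (ih2 ht1) ht2

theorem Der.split {γ α β : List (N ⊕ T)} {v : List H} {w : List T}
    (h : Der R γ v w) (hγ : γ = α ++ β) :
    ∃ v1 v2 w1 w2, w = w1 ++ w2 ∧ Shf v1 v2 v ∧ Der R α v1 w1 ∧ Der R β v2 w2 := by
  induction h generalizing α β with
  | nil =>
    obtain ⟨rfl, rfl⟩ := List.append_eq_nil_iff.1 hγ.symm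
    exact ⟨[], [], [], [], rfl, .nil, .nil, .nil⟩
  | @term t γ v w h ih =>
    cases α with
    | nil =>
      subst hγ
      exact ⟨[], v, [], t :: w, rfl, .nil_left _, .nil, .term t h⟩
    | cons c α =>
      simp only [List.cons_append, List.cons.injEq] at hγ
      obtain ⟨rfl, hγ⟩ := hγ
      obtain ⟨v1, v2, w1, w2, rfl, h1, h2, h3⟩ := ih hγ
      exact ⟨v1, v2, t :: w1, w2, rfl, h1, .term t h2, h3⟩
  | @nonterm A rhs h γ v1 w1 v2 w2 v hr ha hb hs ih1 ih2 =>
    cases α with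
    | nil =>
      subst hγ
      exact ⟨[], v, [], _, rfl, .nil_left _, .nil, .nonterm hr ha hb hs⟩
    | cons c α =>
      simp only [List.cons_append, List.cons.injEq] at hγ
      obtain ⟨rfl, hγ⟩ := hγ
      obtain ⟨v3, v4, w3, w4, rfl, h1, h2, h3⟩ := ih2 hγ
      obtain ⟨x, hx1, hx2⟩ := Shf.assoc' h1 hs
      exact ⟨x, v4, w1 ++ w3, w4, by simp, hx2, .nonterm hr ha h2 hx1, h3⟩

theorem Steps.der {α β : List (N ⊕ T)} {v : List H} (h : Steps R α v β) {w : List T}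
    (hw : β = w.map .inr) : Der R α v w := by
  induction h with
  | refl => subst hw; exact Der.terminals w
  | @head A rhs h p q s y hr _ ih =>
    obtain ⟨v1, v2, w1, w2, rfl, h1, h2, h3⟩ := (ih hw).split (List.append_assoc _ _ _)
    obtain ⟨v3, v4, w3, w4, rfl, h4, h5, h6⟩ := h3.split rfl
    exact h2.append (.nonterm hr h5 h6 (.left h h4)) (.right h h1)

theorem steps_iff_der {α : List (N ⊕ T)} {v : List H} {w : List T} :
    Steps R α v (w.map .inr) ↔ Der R α v w := ⟨fun h => h.der rfl, Der.steps⟩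

end der

section grammar
variable {T M : Type} [Monoid M]

def rs (G : CFValenceGrammar T M) : Set (G.NT × List (G.NT ⊕ T) × M) := {r | r ∈ G.rules}

theorem derives_iff (G : CFValenceGrammar T M) (x y : List (G.NT ⊕ T) × M) :
    G.Derives x y ↔ ∃ s, Steps (rs G) x.1 s y.1 ∧ y.2 = x.2 * s.prod := by
  constructor
  · intro h
    induction h using Relation.ReflTransGen.head_induction_on with
    | refl => exact ⟨[], .refl _, by simp⟩
    | head h1 _ ih =>
      obtain ⟨⟨A, rhs, h⟩, hr, p, q, e1, e2, e3⟩ := h1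
      obtain ⟨s, h4, h5⟩ := ih
      refine ⟨h :: s, ?_, ?_⟩
      · rw [e1]; rw [e2] at h4
        exact .head p q hr h4
      · rw [h5, e3]; simp [mul_assoc]
  · rintro ⟨s, h1, h2⟩
    obtain ⟨x1, x2⟩ := x
    obtain ⟨y1, y2⟩ := y
    simp only at h1 h2
    induction h1 generalizing x2 with
    | refl => simp at h2; subst h2; exact .refl
    | @head A rhs h p q s y hr _ ih =>
      refine Relation.ReflTransGen.head ⟨(A, rhs, h), hr, p, q, rfl, rfl, rfl⟩ (ih _ ?_)
      simp [h2, mul_assoc]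

theorem mem_lang (G : CFValenceGrammar T M) (w : List T) :
    w ∈ G.lang ↔ ∃ v, Der (rs G) [.inl G.start] v w ∧ v.prod = 1 := by
  have : w ∈ G.lang ↔ G.Derives ([.inl G.start], 1) (w.map .inr, 1) := Iff.rfl
  rw [this, derives_iff]
  simp only [steps_iff_der, one_mul, eq_comm]

end grammar

section annotate
variable {N T H : Type} {K : ℕ}

/-- Short words. -/
abbrev Sh (H : Type) (K : ℕ) : Type := {u : List H // u.length ≤ K}

/-- Forget annotations. -/
def fg : (N × Sh H K) ⊕ T → N ⊕ T := Sum.map Prod.fst id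

/-- Shuffles of the annotations in a sentential form. -/
inductive Ann : List ((N × Sh H K) ⊕ T) → List H → Prop
  | nil : Ann [] []
  | term (t : T) {α s} : Ann α s → Ann (.inr t :: α) s
  | nonterm (A : N) (u : Sh H K) {α s1 s} : Ann α s1 → Shf u.1 s1 s → Ann (.inl (A, u) :: α) s

variable [Monoid H]

/-- The annotated rules. -/
def annRules (K : ℕ) (R : Set (N × List (N ⊕ T) × H)) :
    Set ((N × Sh H K) × List ((N × Sh H K) ⊕ T) × Unit) :=
  {x | ∃ h s, (x.1.1, x.2.1.map fg, h) ∈ R ∧ Ann x.2.1 s ∧ Le x.1.2.1 (h :: s)}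

theorem finite_fiber [Finite N] [Finite H] (α : List (N ⊕ T)) :
    {α' : List ((N × Sh H K) ⊕ T) | α'.map fg = α}.Finite := by
  have hfin : Finite (Sh H K) := (List.finite_length_le H K).to_subtype
  induction α with
  | nil => simp
  | cons c α ih =>
    have h1 : {c' : (N × Sh H K) ⊕ T | fg c' = c}.Finite := by
      cases c with
      | inl A =>
        refine (Set.finite_range (fun x : N × Sh H K => (Sum.inl x : (N × Sh H K) ⊕ T))).subset ?_
        rintro (x | t) h
        · exact ⟨x, rfl⟩
        · simp [fg] at h
      | inr t =>
        refine (Set.finite_singleton (Sum.inr t)).subset ?_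
        rintro (x | t) h
        · simp [fg] at h
        · simpa [fg] using h
    refine (Set.Finite.image2 List.cons h1 ih).subset ?_
    rintro (_ | ⟨c', α'⟩) h
    · simp at h
    · simp only [Set.mem_ofPred_eq, List.map_cons, List.cons.injEq] at h
      exact ⟨c', h.1, α', h.2, rfl⟩

theorem annRules_finite [Finite N] [Finite H] {R : Set (N × List (N ⊕ T) × H)} (hR : R.Finite) :
    (annRules K R).Finite := by
  have hfin : Finite (Sh H K) := (List.finite_length_le H K).to_subtype
  refine (hR.biUnion (t := fun r => (Set.univ : Set (N × Sh H K)) ×ˢ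
    ({α' | α'.map fg = r.2.1} ×ˢ (Set.univ : Set Unit))) ?_).subset ?_
  · intro r _
    exact Set.finite_univ.prod ((finite_fiber _).prod Set.finite_univ)
  · rintro ⟨A, α, u⟩ ⟨h, s, h1, -, -⟩
    simp only [Set.mem_iUnion]
    exact ⟨_, h1, by simp⟩

theorem sound {R : Set (N × List (N ⊕ T) × H)} {α : List ((N × Sh H K) ⊕ T)} {x : List Unit}
    {w : List T} (h : Der (annRules K R) α x w) {s : List H} (hs : Ann α s) :
    ∃ v, Der R (α.map fg) v w ∧ Le s v := by
  induction h generalizing s with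
  | nil => cases hs; exact ⟨[], .nil, .refl _⟩
  | term t _ ih =>
    cases hs with
    | term _ hs =>
      obtain ⟨v, h1, h2⟩ := ih hs
      exact ⟨v, .term t h1, h2⟩
  | nonterm hr _ _ _ ih1 ih2 =>
    cases hs with
    | nonterm A u hs hsh =>
      obtain ⟨h, s1, h1, h2, h3⟩ := hr
      obtain ⟨v1, h4, h5⟩ := ih1 h2
      obtain ⟨v2, h6, h7⟩ := ih2 hs
      obtain ⟨y1, h8, h9⟩ := (h3.trans (h5.cons h)).shf hsh
      obtain ⟨y2, h10, h11⟩ := h7.shf h8.comm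
      exact ⟨y2, .nonterm h1 h4 h6 h10.comm, h9.trans h11⟩

end annotate

section complete
variable {N T H : Type} [Group H] [Fintype H]

theorem exists_shf {X : Type} (u v : List X) : ∃ y, Shf u v y :=
  ⟨u ++ v, by simpa using (Shf.nil_right u).append (Shf.nil_left v)⟩

theorem complete {R : Set (N × List (N ⊕ T) × H)} {α : List (N ⊕ T)} {v : List H}
    {w : List T} (h : Der R α v w) {z y : List H} (hs : Shf v z y) :
    ∃ (α' : List ((N × Sh H (Fintype.card (H × H))) ⊕ T)) (s y' : List H) (x : List Unit),
      α'.map fg = α ∧ Ann α' s ∧ Shf s z y' ∧ y'.prod = y.prod ∧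
      Der (annRules (Fintype.card (H × H)) R) α' x w := by
  induction h generalizing z y with
  | nil => exact ⟨[], [], y, [], rfl, .nil, hs, rfl, .nil⟩
  | term t _ ih =>
    obtain ⟨α', s, y', x, rfl, h1, h2, h3, h4⟩ := ih hs
    exact ⟨.inr t :: α', s, y', x, rfl, .term t h1, h2, h3, .term t h4⟩
  | @nonterm A rhs h α v1 w1 v2 w2 v hr _ _ hsh ih1 ih2 =>
    obtain ⟨z', h1, h2⟩ := hsh.assoc hs
    obtain ⟨za, zb, y1, rfl, rfl, h3⟩ := h2.split_cons
    obtain ⟨rhs', s1, y1', x1, h4, h5, h6, h7, h8⟩ := ih1 h3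
    have h9 : Shf (h :: s1) (za ++ zb) (za ++ h :: y1') :=
      (Shf.nil_left za).append (.left h h6)
    obtain ⟨u, h10, h11, y3, h12, h13⟩ := shorten h9
    obtain ⟨t, h14, h15⟩ := h1.assoc h12.comm
    obtain ⟨α', s2, y4, x2, h16, h17, h18, h19, h20⟩ := ih2 h15
    obtain ⟨s, h21, h22⟩ := Shf.assoc' h14 h18
    obtain ⟨s', h23, h24⟩ := Shf.assoc' h14.comm h18
    obtain ⟨x, hx⟩ := exists_shf (() :: x1) x2
    refine ⟨.inl (A, ⟨u, h11⟩) :: α', s', y4, x, ?_, .nonterm A _ h17 h23.comm, h24, ?_,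
      .nonterm ?_ h8 h20 hx⟩
    · rw [List.map_cons, h16]; rfl
    · rw [h19, h13]; simp [h7]
    · exact ⟨h, s1, by simpa [h4] using hr, h5, h10⟩

end complete

section main
variable {T : Type}

theorem finite_case {H : Type} [Group H] [Finite H] {L : Language T} (hL : L ∈ LValCF T H) :
    L ∈ LValCF T Unit := by
  obtain ⟨G, rfl⟩ := hL
  have := Fintype.ofFinite H
  have hN : Finite G.NT := @Finite.of_fintype _ G.fintypeNT
  set K := Fintype.card (H × H) with hK
  have hfin : Finite (Sh H K) := (List.finite_length_le H K).to_subtype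
  have hR : (annRules K (rs G)).Finite := annRules_finite (List.finite_toSet G.rules)
  let G' : CFValenceGrammar T Unit :=
    { NT := G.NT × Sh H K
      fintypeNT := Fintype.ofFinite _
      start := (G.start, ⟨[], Nat.zero_le _⟩)
      rules := hR.toFinset.toList }
  have hG' : rs G' = annRules K (rs G) := by
    ext r
    simp [rs, G']
  refine ⟨G', ?_⟩
  ext w
  rw [mem_lang, mem_lang, hG']
  constructor
  · rintro ⟨v, h, -⟩
    obtain ⟨v', h1, h2⟩ := sound h (s := []) (.nonterm _ _ .nil .nil)
    exact ⟨v', h1, h2.prod_eq.symm⟩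
  · rintro ⟨v, h, hv⟩
    obtain ⟨α', s, y', x, h1, h2, h3, h4, h5⟩ := complete h (Shf.nil_right v)
    cases h2 with
    | nil => simp at h1
    | term t h2 => simp [fg] at h1
    | @nonterm A u α s1 s h2 hs =>
      simp only [List.map_cons, List.cons.injEq, List.map_eq_nil_iff, fg, Sum.map_inl,
        Sum.inl.injEq] at h1
      obtain ⟨rfl, rfl⟩ := h1
      cases h2
      have e1 := hs.comm.eq_of_nil_left
      have e2 := h3.comm.eq_of_nil_left
      subst e1 e2
      rw [hv] at h4
      cases h5 with
      | nonterm hr ha hb hsh =>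
        obtain ⟨g, s, h6, h7, h8⟩ := hr
        have h9 : Le [] u.1 := by simpa using Le.single (a := []) (b := []) h4
        have h10 : ((G.start, ⟨[], Nat.zero_le _⟩), _, ()) ∈ annRules K (rs G) :=
          ⟨g, s, h6, h7, h9.trans h8⟩
        exact ⟨_, .nonterm h10 ha hb hsh, rfl⟩

/-- Change the valences of a grammar. -/
def gmap {M M' : Type} [Monoid M] [Monoid M'] (f : M → M') (G : CFValenceGrammar T M) :
    CFValenceGrammar T M' :=
  { NT := G.NT, fintypeNT := G.fintypeNT, start := G.start
    rules := G.rules.map fun r => (r.1, r.2.1, f r.2.2) }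

theorem der_map {N H H' : Type} (f : H → H') {R : Set (N × List (N ⊕ T) × H)}
    {α : List (N ⊕ T)} {v : List H} {w : List T} (h : Der R α v w) :
    Der (Set.image (fun r => (r.1, r.2.1, f r.2.2)) R) α (v.map f) w := by
  have hs : ∀ {u v y : List H}, Shf u v y → Shf (u.map f) (v.map f) (y.map f) := by
    intro u v y h
    induction h with
    | nil => exact .nil
    | left a _ ih => exact .left _ ih
    | right a _ ih => exact .right _ ih
  induction h with
  | nil => exact .nil
  | term t _ ih => exact .term t ih
  | nonterm hr _ _ hsh ih1 ih2 => exact .nonterm ⟨_, hr, rfl⟩ ih1 ih2 (hs hsh)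

theorem shf_of_map {H H' : Type} (f : H → H') {u v : List H} {y : List H'}
    (h : Shf (u.map f) (v.map f) y) : ∃ y', y'.map f = y ∧ Shf u v y' := by
  generalize hu : u.map f = u' at h
  generalize hv : v.map f = v' at h
  induction h generalizing u v with
  | nil =>
    simp only [List.map_eq_nil_iff] at hu hv
    subst hu hv
    exact ⟨[], rfl, .nil⟩
  | left a _ ih =>
    cases u with
    | nil => simp at hu
    | cons b u =>
      simp only [List.map_cons, List.cons.injEq] at hu
      obtain ⟨rfl, hu⟩ := hu
      obtain ⟨y', rfl, h⟩ := ih hu hv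
      exact ⟨b :: y', rfl, .left b h⟩
  | right a _ ih =>
    cases v with
    | nil => simp at hv
    | cons b v =>
      simp only [List.map_cons, List.cons.injEq] at hv
      obtain ⟨rfl, hv⟩ := hv
      obtain ⟨y', rfl, h⟩ := ih hu hv
      exact ⟨b :: y', rfl, .right b h⟩

theorem der_of_map {N H H' : Type} (f : H → H') {R : Set (N × List (N ⊕ T) × H)}
    {α : List (N ⊕ T)} {v : List H'} {w : List T}
    (h : Der (Set.image (fun r => (r.1, r.2.1, f r.2.2)) R) α v w) :
    ∃ v', v'.map f = v ∧ Der R α v' w := by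
  induction h with
  | nil => exact ⟨[], rfl, .nil⟩
  | term t _ ih =>
    obtain ⟨v', rfl, h⟩ := ih
    exact ⟨v', rfl, .term t h⟩
  | nonterm hr _ _ hsh ih1 ih2 =>
    obtain ⟨v1, rfl, h1⟩ := ih1
    obtain ⟨v2, rfl, h2⟩ := ih2
    obtain ⟨⟨A, rhs, h⟩, hr, e⟩ := hr
    simp only [Prod.mk.injEq] at e
    obtain ⟨rfl, rfl, rfl⟩ := e
    obtain ⟨y', rfl, h3⟩ := shf_of_map f (u := h :: v1) hsh
    exact ⟨y', rfl, .nonterm hr h1 h2 h3⟩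

theorem mem_lang_gmap {M M' : Type} [Monoid M] [Monoid M'] (f : M →* M')
    (G : CFValenceGrammar T M) (w : List T) :
    w ∈ (gmap f G).lang ↔ ∃ v, Der (rs G) [.inl G.start] v w ∧ f v.prod = 1 := by
  rw [mem_lang]
  have e : rs (gmap f G) = Set.image (fun r => (r.1, r.2.1, f r.2.2)) (rs G) := by
    ext r
    exact List.mem_map
  rw [e]
  constructor
  · rintro ⟨v, h, hv⟩
    obtain ⟨v', rfl, h'⟩ := der_of_map f h
    exact ⟨v', h', by rw [map_list_prod, hv]⟩
  · rintro ⟨v, h, hv⟩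
    exact ⟨v.map f, der_map f h, by rw [← map_list_prod, hv]⟩

theorem exists_gmap {M M' : Type} [Monoid M] [Monoid M'] (f : M → M')
    (G : CFValenceGrammar T M') (h : ∀ r ∈ G.rules, ∃ m, f m = r.2.2) :
    ∃ G', gmap f G' = G := by
  obtain ⟨N, hN, S, R⟩ := G
  have : ∃ R' : List (N × List (N ⊕ T) × M), R'.map (fun r => (r.1, r.2.1, f r.2.2)) = R := by
    simp only at h
    induction R with
    | nil => exact ⟨[], rfl⟩
    | cons r R ih =>
      obtain ⟨R', rfl⟩ := ih fun r hr => h r (List.mem_cons_of_mem _ hr)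
      obtain ⟨m, hm⟩ := h r List.mem_cons_self
      exact ⟨(r.1, r.2.1, m) :: R', by simp [hm]⟩
  obtain ⟨R', rfl⟩ := this
  exact ⟨⟨N, hN, S, R'⟩, rfl⟩

theorem transfer {F M M' : Type} [Monoid F] [Monoid M] [Monoid M'] (f : F →* M) (g : F →* M')
    (hfg : ∀ x, f x = 1 ↔ g x = 1) (G : CFValenceGrammar T M)
    (h : ∀ r ∈ G.rules, ∃ m, f m = r.2.2) : G.lang ∈ LValCF T M' := by
  obtain ⟨G', rfl⟩ := exists_gmap f G h
  refine ⟨gmap g G', ?_⟩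
  ext w
  rw [mem_lang_gmap, mem_lang_gmap]
  simp only [hfg]

theorem transfer_inj {M M' : Type} [Monoid M] [Monoid M'] (g : M →* M')
    (hg : ∀ x, g x = 1 → x = 1) : LValCF T M ⊆ LValCF T M' := by
  rintro _ ⟨G, rfl⟩
  exact transfer (MonoidHom.id M) g (fun x => ⟨fun h => by simp at h; simp [h], fun h => hg x h⟩) G
    fun r _ => ⟨_, rfl⟩

theorem locally_finite_case {G : Type} [Group G]
    (hG : ∀ H : Subgroup G, H.FG → Finite H) : LValCF T G ⊆ LValCF T Unit := by
  rintro _ ⟨g, rfl⟩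
  let H := Subgroup.closure (Set.image (fun r => r.2.2) {r | r ∈ g.rules})
  have hH : H.FG := (Subgroup.fg_iff _).2 ⟨_, rfl, Set.Finite.image (fun r => r.2.2)
    (List.finite_toSet g.rules)⟩
  have := hG H hH
  apply finite_case (H := H)
  exact transfer H.subtype (MonoidHom.id H) (fun x => by simp) g
    fun r hr => ⟨⟨r.2.2, Subgroup.subset_closure ⟨r, hr, rfl⟩⟩, rfl⟩

/-! Bicyclic monoid -/

theorem normal_form {M : Type} [Monoid M] {a b : M} (hab : a * b = 1) (x : M) (i j : ℕ)
    (hx : x = b ^ i * a ^ j) : a * x = match i with | 0 => b ^ 0 * a ^ (j+1) | i+1 => b ^ i * a ^ j := by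
  subst hx
  cases i with
  | zero => simp [pow_succ']
  | succ i => simp [pow_succ', ← mul_assoc, hab]

theorem normal_one {M : Type} [Monoid M] {a b : M} (hab : a * b = 1) (hba : b * a ≠ 1) {i j : ℕ} :
    b ^ i * a ^ j = 1 ↔ i = 0 ∧ j = 0 := by
  constructor
  · intro h
    constructor
    · cases i with
      | zero => rfl
      | succ i =>
        exfalso
        rw [pow_succ', mul_assoc] at h
        have : a = b ^ i * a ^ j := left_inv_eq_right_inv hab h
        exact hba (this ▸ h)
    · cases j with
      | zero => rfl
      | succ j =>
        exfalso
        rw [pow_succ, ← mul_assoc] at h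
        have : b ^ i * a ^ j = b := left_inv_eq_right_inv h hab
        exact hba (this ▸ h)
  · rintro ⟨rfl, rfl⟩; simp

theorem bicyclic_case {M : Type} [Monoid M] {a b : M} (hab : a * b = 1) (hba : b * a ≠ 1) :
    LValCF T BicyclicMonoid ⊆ LValCF T M := by
  rintro _ ⟨G, rfl⟩
  let P : BicyclicMonoid := ⟨polyP (Fin 1) 0, Submonoid.subset_closure (Or.inl ⟨0, rfl⟩)⟩
  let Q : BicyclicMonoid := ⟨polyQ (Fin 1) 0, Submonoid.subset_closure (Or.inr ⟨0, rfl⟩)⟩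
  have hQP : Q * P = 1 := by
    apply Subtype.ext
    funext u
    change polyQ (Fin 1) 0 (polyP (Fin 1) 0 u) = u
    cases u <;> simp [polyP, polyQ]
  have hPQ : P * Q ≠ 1 := by
    intro h
    have h1 := congrFun (congrArg Subtype.val h) (some [])
    change polyP (Fin 1) 0 (polyQ (Fin 1) 0 (some [])) = some [] at h1
    simp [polyP, polyQ] at h1
  let f : FreeMonoid Bool →* BicyclicMonoid := FreeMonoid.lift fun c => if c then Q else P
  let g : FreeMonoid Bool →* M := FreeMonoid.lift fun c => if c then a else b
  have key : ∀ x, ∃ i j : ℕ, f x = P ^ i * Q ^ j ∧ g x = b ^ i * a ^ j := by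
    intro x
    induction x using FreeMonoid.inductionOn' with
    | one => exact ⟨0, 0, by simp, by simp⟩
    | of_mul c x ih =>
      obtain ⟨i, j, h1, h2⟩ := ih
      cases c with
      | false =>
        exact ⟨i + 1, j, by rw [map_mul, h1]; simp [f, pow_succ', mul_assoc],
          by rw [map_mul, h2]; simp [g, pow_succ', mul_assoc]⟩
      | true =>
        have e1 := normal_form hQP _ i j h1
        have e2 := normal_form hab _ i j h2
        have e3 : f (FreeMonoid.of true * x) = Q * f x := by simp [f]
        have e4 : g (FreeMonoid.of true * x) = a * g x := by simp [g]
        rw [e3, e4, e1, e2]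
        cases i with
        | zero => exact ⟨0, j + 1, rfl, rfl⟩
        | succ i => exact ⟨i, j, rfl, rfl⟩
  have hsurj : ∀ m, ∃ x, f x = m := by
    rintro ⟨m, hm⟩
    have : m ∈ MonoidHom.mrange ((PolycyclicMonoid (Fin 1)).subtype.comp f) := by
      refine (Submonoid.closure_le.2 ?_) hm
      rintro _ (⟨c, rfl⟩ | ⟨c, rfl⟩)
      · obtain rfl : c = 0 := Subsingleton.elim _ _
        exact ⟨FreeMonoid.of false, by simp [f, P]⟩
      · obtain rfl : c = 0 := Subsingleton.elim _ _
        exact ⟨FreeMonoid.of true, by simp [f, Q]⟩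
    obtain ⟨x, hx⟩ := this
    exact ⟨x, Subtype.ext hx⟩
  refine transfer f g (fun x => ?_) G fun r _ => hsurj _
  obtain ⟨i, j, h1, h2⟩ := key x
  rw [h1, h2, normal_one hQP hPQ, normal_one hab hba]

/-! Units -/

theorem units_case {M : Type} [Monoid M] (hM : ∀ a b : M, a * b = 1 → b * a = 1) :
    LValCF T M = LValCF T Mˣ := by
  apply Set.Subset.antisymm
  · rintro _ ⟨G, rfl⟩
    classical
    let G0 : CFValenceGrammar T M :=
      { NT := G.NT, fintypeNT := G.fintypeNT, start := G.start
        rules := G.rules.filter fun r => IsUnit r.2.2 }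
    have hl : G0.lang = G.lang := by
      ext w
      rw [mem_lang, mem_lang]
      constructor
      · rintro ⟨v, h, hv⟩
        refine ⟨v, ?_, hv⟩
        change Der (rs G0) [.inl G.start] v w at h
        generalize [Sum.inl G.start] = α at h
        clear hv
        induction h with
        | nil => exact .nil
        | term t _ ih => exact .term t ih
        | nonterm hr _ _ hsh ih1 ih2 => exact .nonterm (List.mem_of_mem_filter hr) ih1 ih2 hsh
      · rintro ⟨v, h, hv⟩
        refine ⟨v, ?_, hv⟩
        have hu : ∀ v : List M, IsUnit v.prod → ∀ x ∈ v, IsUnit x := by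
          intro v
          induction v with
          | nil => simp
          | cons x v ih =>
            intro h
            rw [List.prod_cons] at h
            obtain ⟨c, hc⟩ := h.exists_right_inv
            rw [mul_assoc] at hc
            have hx : IsUnit x := ⟨⟨x, _, hc, hM _ _ hc⟩, rfl⟩
            have hv : IsUnit v.prod := by
              obtain ⟨x, rfl⟩ := hx
              simpa using h
            intro y hy
            rcases List.mem_cons.1 hy with rfl | hy
            · exact hx
            · exact ih hv y hy
        have hv' := hu v (hv ▸ isUnit_one)
        have hshf : ∀ {u v y : List M}, Shf u v y → (∀ x ∈ y, IsUnit x) →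
            (∀ x ∈ u, IsUnit x) ∧ (∀ x ∈ v, IsUnit x) := by
          intro u v y h
          induction h with
          | nil => simp
          | left a _ ih => simp only [List.mem_cons, forall_eq_or_imp]; tauto
          | right a _ ih => simp only [List.mem_cons, forall_eq_or_imp]; tauto
        change Der (rs G0) [.inl G.start] v w
        generalize [Sum.inl G.start] = α at h
        clear hv
        induction h with
        | nil => exact .nil
        | term t _ ih => exact .term t (ih hv')
        | nonterm hr _ _ hsh ih1 ih2 =>
          obtain ⟨h1, h2⟩ := hshf hsh hv'
          simp only [List.mem_cons, forall_eq_or_imp] at h1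
          refine .nonterm ?_ (ih1 h1.2) (ih2 h2) hsh
          exact List.mem_filter.2 ⟨hr, by simpa using h1.1⟩
    rw [← hl]
    refine transfer (Units.coeHom M) (MonoidHom.id _) (fun x => by simp) G0 fun r hr => ?_
    have := (List.mem_filter.1 hr).2
    simp only [decide_eq_true_eq] at this
    exact this
  · exact transfer_inj (Units.coeHom M) fun x hx => by simpa using hx

/-! Relation with Mathlib's context-free grammars -/

theorem unit_to_cf {L : Language T} (hL : L ∈ LValCF T Unit) : L.IsContextFree := by
  classical
  obtain ⟨G, rfl⟩ := hL
  let φ : G.NT ⊕ T → Symbol T G.NT := Sum.elim .nonterminal .terminal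
  let ψ : Symbol T G.NT → G.NT ⊕ T := fun s => match s with
    | .nonterminal A => .inl A
    | .terminal t => .inr t
  have hψφ : ∀ x, ψ (φ x) = x := by rintro (x | x) <;> rfl
  have hφψ : ∀ x, φ (ψ x) = x := by rintro (x | x) <;> rfl
  have hψφ' : ∀ l : List _, (l.map φ).map ψ = l := by intro l; simp [Function.comp_def, hψφ]
  have hφψ' : ∀ l : List _, (l.map ψ).map φ = l := by intro l; simp [Function.comp_def, hφψ]
  let g : ContextFreeGrammar T :=
    { NT := G.NT
      initial := G.start
      rules := (G.rules.map fun r => (⟨r.1, r.2.1.map φ⟩ : ContextFreeRule T G.NT)).toFinset }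
  refine ⟨g, ?_⟩
  have h1 : ∀ x y, g.Derives x y → G.Derives (x.map ψ, 1) (y.map ψ, 1) := by
    intro x y h
    induction h with
    | refl => exact Relation.ReflTransGen.refl
    | tail _ h ih =>
      refine ih.tail ?_
      obtain ⟨r, hr, h⟩ := h
      obtain ⟨p, q, rfl, rfl⟩ := h.exists_parts
      simp only [g, List.mem_toFinset, List.mem_map] at hr
      obtain ⟨r, hr, rfl⟩ := hr
      refine ⟨r, hr, p.map ψ, q.map ψ, ?_, ?_, rfl⟩
      · simp [ψ]
      · simp only [List.map_append, hψφ']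
  have h2 : ∀ x y, G.Derives x y → g.Derives (x.1.map φ) (y.1.map φ) := by
    intro x y h
    induction h with
    | refl => exact Relation.ReflTransGen.refl
    | tail _ h ih =>
      refine ih.tail ?_
      obtain ⟨r, hr, p, q, e1, e2, -⟩ := h
      refine ⟨⟨r.1, r.2.1.map φ⟩, ?_, ?_⟩
      · simp only [g, List.mem_toFinset, List.mem_map]
        exact ⟨r, hr, rfl⟩
      · rw [ContextFreeRule.rewrites_iff, e1, e2]
        exact ⟨p.map φ, q.map φ, by simp [φ], by simp⟩
  ext w
  rw [ContextFreeGrammar.mem_language_iff]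
  constructor
  · intro h
    have := h1 _ _ h
    rw [List.map_map] at this
    exact this
  · intro h
    have := h2 _ _ h
    simpa [Function.comp_def, φ] using this

theorem cf_to_unit {L : Language T} (hL : L.IsContextFree) : L ∈ LValCF T Unit := by
  classical
  obtain ⟨g, rfl⟩ := hL
  let S : Finset g.NT := insert g.initial (g.rules.image fun r => r.input)
  let f : g.NT → Option S := fun A => if h : A ∈ S then some ⟨A, h⟩ else none
  have hf : ∀ A B, A ∈ S → f B = f A → B = A := by
    intro A B hA h
    by_cases hB : B ∈ S
    · simpa [f, hA, hB] using h
    · simp [f, hA, hB] at h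
  let ψ : Symbol T g.NT → Option S ⊕ T := fun s => match s with
    | .nonterminal A => .inl (f A)
    | .terminal t => .inr t
  let G : CFValenceGrammar T Unit :=
    { NT := Option S
      fintypeNT := inferInstance
      start := f g.initial
      rules := g.rules.toList.map fun r => (f r.input, r.output.map ψ, 1) }
  refine ⟨G, ?_⟩
  have h1 : ∀ x y, g.Derives x y → G.Derives (x.map ψ, 1) (y.map ψ, 1) := by
    intro x y h
    induction h with
    | refl => exact Relation.ReflTransGen.refl
    | tail _ h ih =>
      refine ih.tail ?_
      obtain ⟨r, hr, h⟩ := h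
      obtain ⟨p, q, rfl, rfl⟩ := h.exists_parts
      refine ⟨(f r.input, r.output.map ψ, 1), ?_, p.map ψ, q.map ψ, ?_, ?_, rfl⟩
      · simp only [G, List.mem_map, Finset.mem_toList]
        exact ⟨r, hr, rfl⟩
      · simp [ψ]
      · simp
  have h2 : ∀ x y, G.Derives x y → ∀ x', x'.map ψ = x.1 → ∃ y', y'.map ψ = y.1 ∧ g.Derives x' y' := by
    intro x y h x' hx'
    induction h with
    | refl => exact ⟨x', hx', Relation.ReflTransGen.refl⟩
    | tail _ h ih =>
      obtain ⟨y', h3, h4⟩ := ih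
      obtain ⟨r, hr, p, q, e1, e2, -⟩ := h
      simp only [G, List.mem_map, Finset.mem_toList] at hr
      obtain ⟨r, hr, rfl⟩ := hr
      rw [e1] at h3
      obtain ⟨p', c, rfl, rfl, h5⟩ := List.map_eq_append_iff.1 h3
      obtain ⟨A, q', rfl, h6, rfl⟩ := List.map_eq_cons_iff.1 h5
      obtain rfl : A = .nonterminal r.input := by
        cases A with
        | terminal t => simp [ψ] at h6
        | nonterminal A =>
          simp only [ψ, Sum.inl.injEq] at h6
          rw [hf r.input A (Finset.mem_insert_of_mem (Finset.mem_image_of_mem _ hr)) h6]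
      refine ⟨p' ++ r.output ++ q', ?_, h4.tail ⟨r, hr, ?_⟩⟩
      · rw [e2]; simp
      · rw [ContextFreeRule.rewrites_iff]
        exact ⟨p', q', by simp, rfl⟩
  have hterm : ∀ (w : List T) y', y'.map ψ = w.map .inr → y' = w.map .terminal := by
    intro w
    induction w with
    | nil => simp
    | cons t w ih =>
      intro y' h
      cases y' with
      | nil => simp at h
      | cons c y' =>
        simp only [List.map_cons, List.cons.injEq] at h
        rw [ih _ h.2]
        cases c with
        | terminal s => simpa [ψ] using h.1
        | nonterminal A => simp [ψ] at h
  ext w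
  rw [ContextFreeGrammar.mem_language_iff]
  constructor
  · intro h
    obtain ⟨y', h3, h4⟩ := h2 _ _ h [.nonterminal g.initial] rfl
    rw [← hterm w y' h3]
    exact h4
  · intro h
    have := h1 _ _ h
    rw [List.map_map] at this
    exact this

theorem cf_subset {M : Type} [Monoid M] {L : Language T} (hL : L.IsContextFree) :
    L ∈ LValCF T M := by
  have : LValCF T Unit ⊆ LValCF T M := transfer_inj (1 : Unit →* M) fun _ _ => rfl
  exact this (cf_to_unit hL)

end main

end VG

/-- For every monoid `M`, at least one of the following holds:
(i) `𝔏(Val, CF, M)` is the class of context-free languages;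
(ii) `𝔏(Val, CF, M)` contains `𝔏(Val, CF, B)` where `B` is the bicyclic monoid;
(iii) `𝔏(Val, CF, M)` contains `𝔏(Val, CF, ℤ)`;
(iv) `𝔏(Val, CF, M) = 𝔏(Val, CF, G)` for some infinite periodic group `G` that is not
locally finite. -/
theorem LValCF_tetrachotomy (M : Type) [Monoid M] :
    (∀ (T : Type) (L : Language T), L ∈ LValCF T M ↔ L.IsContextFree) ∨
    (∀ T : Type, LValCF T BicyclicMonoid ⊆ LValCF T M) ∨
    (∀ T : Type, LValCF T (Multiplicative ℤ) ⊆ LValCF T M) ∨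
    (∃ (G : Type) (_i : Group G),
      Infinite G ∧ (∀ g : G, ∃ n : ℕ, 0 < n ∧ g ^ n = 1) ∧
        ¬ (∀ H : Subgroup G, H.FG → Finite H) ∧
        ∀ T : Type, LValCF T M = LValCF T G) := by
  by_cases hM : ∀ a b : M, a * b = 1 → b * a = 1
  swap
  · push Not at hM
    obtain ⟨a, b, hab, hba⟩ := hM
    exact Or.inr (Or.inl fun T => VG.bicyclic_case hab hba)
  by_cases hper : ∀ g : Mˣ, ∃ n : ℕ, 0 < n ∧ g ^ n = 1
  swap
  · push Not at hper
    obtain ⟨g, hg⟩ := hper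
    refine Or.inr (Or.inr (Or.inl fun T => ?_))
    rw [VG.units_case hM]
    refine VG.transfer_inj (zpowersHom Mˣ g) fun x hx => ?_
    have hinj : Function.Injective fun n : ℤ => g ^ n := by
      rw [injective_zpow_iff_not_isOfFinOrder, isOfFinOrder_iff_pow_eq_one]
      rintro ⟨n, hn, h⟩
      exact hg n hn h
    have h0 : x.toAdd = 0 := hinj (by simpa [zpowersHom_apply] using hx)
    exact h0
  by_cases hlf : ∀ H : Subgroup Mˣ, H.FG → Finite H
  · left
    intro T L
    constructor
    · intro hL
      rw [VG.units_case hM] at hL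
      exact VG.unit_to_cf (VG.locally_finite_case hlf hL)
    · exact VG.cf_subset
  · refine Or.inr (Or.inr (Or.inr ⟨Mˣ, inferInstance, ?_, hper, hlf, fun T => VG.units_case hM⟩))
    by_contra hfin
    rw [not_infinite_iff_finite] at hfin
    exact hlf fun H _ => inferInstance
end

section
/- Let M be a commutative monoid. Then there exists a group G such that 𝔏(Val,CF,M) = 𝔏(Val,CF,G). -/
theorem lang_units_eq {T M : Type} [CommMonoid M] (NT : Type) (fi : Fintype NT) (s : NT)
    (rM : List (NT × List (NT ⊕ T) × M)) (rU : List (NT × List (NT ⊕ T) × Mˣ))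
    (h : ∀ A α (u : Mˣ), (A, α, u) ∈ rU ↔ (A, α, (u : M)) ∈ rM) :
    (CFValenceGrammar.mk NT fi s rM).lang = (CFValenceGrammar.mk NT fi s rU).lang := by
  have back : ∀ (x y : List (NT ⊕ T) × Mˣ),
      (CFValenceGrammar.mk NT fi s rU).Derives x y →
      (CFValenceGrammar.mk NT fi s rM).Derives (x.1, (x.2 : M)) (y.1, (y.2 : M)) := by
    intro x y hd
    refine Relation.ReflTransGen.lift
      (fun z : List (NT ⊕ T) × Mˣ => ((z.1, (z.2 : M)) : List (NT ⊕ T) × M)) ?_ _ _ hd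
    rintro a b ⟨⟨A, α, m⟩, hr, u, v, h1, h2, h3⟩
    exact ⟨(A, α, (m : M)), (h A α m).1 hr, u, v, h1, h2, by simp [h3]⟩
  have forth : ∀ (x y : List (NT ⊕ T) × M),
      (CFValenceGrammar.mk NT fi s rM).Derives x y →
      ∀ a b : Mˣ, x.2 = (a : M) → y.2 = (b : M) →
      (CFValenceGrammar.mk NT fi s rU).Derives (x.1, a) (y.1, b) := by
    intro x y hd
    induction hd with
    | refl =>
      intro a b ha hb
      have : a = b := Units.ext (ha.symm.trans hb)
      subst this
      exact Relation.ReflTransGen.refl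
    | @tail y z _ hs ih =>
      intro a b ha hb
      obtain ⟨⟨A, α, m⟩, hr, u, v, h1, h2, h3⟩ := hs
      have hu : IsUnit (y.2 * m) := by
        have h4 : z.2 = y.2 * m := h3
        rw [← h4, hb]
        exact b.isUnit
      obtain ⟨⟨c, hc⟩, ⟨d, hd⟩⟩ := IsUnit.mul_iff.1 hu
      subst hd
      refine Relation.ReflTransGen.tail (ih a c ha hc.symm) ?_
      refine ⟨(A, α, d), (h A α d).2 hr, u, v, h1, h2, ?_⟩
      apply Units.ext
      change (b : M) = ((c * d : Mˣ) : M)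
      rw [← hb, h3, Units.val_mul, hc]
  ext w
  constructor
  · intro hw
    exact forth _ _ hw 1 1 rfl rfl
  · intro hw
    exact back _ _ hw

/-- Let `M` be a commutative monoid.  Then there exists a group `G`
with `𝔏(Val, CF, M) = 𝔏(Val, CF, G)` (over every terminal alphabet). -/
theorem LValCF_comm_eq_group (M : Type) [CommMonoid M] :
    ∃ (G : Type) (_i : Group G), ∀ T : Type, LValCF T M = LValCF T G := by
  classical
  refine ⟨Mˣ, inferInstance, fun T => ?_⟩
  ext L
  constructor
  · rintro ⟨⟨NT, fi, s, r⟩, rfl⟩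
    refine ⟨⟨NT, fi, s, r.filterMap (fun p =>
      if hp : IsUnit p.2.2 then some (p.1, p.2.1, hp.unit) else none)⟩, ?_⟩
    refine (lang_units_eq NT fi s r _ ?_).symm
    intro A α u
    rw [List.mem_filterMap]
    constructor
    · rintro ⟨⟨B, β, m⟩, hp, he⟩
      by_cases hm : IsUnit m
      · simp only [hm, dite_true, Option.some.injEq, Prod.mk.injEq] at he
        obtain ⟨rfl, rfl, rfl⟩ := he
        exact hp
      · simp [hm] at he
    · intro hp
      exact ⟨_, hp, by simp⟩
  · rintro ⟨⟨NT, fi, s, r⟩, rfl⟩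
    refine ⟨⟨NT, fi, s, r.map (fun p => (p.1, p.2.1, (p.2.2 : M)))⟩, ?_⟩
    refine lang_units_eq NT fi s _ r ?_
    intro A α u
    rw [List.mem_map]
    constructor
    · intro hp
      exact ⟨_, hp, rfl⟩
    · rintro ⟨⟨B, β, m⟩, hp, he⟩
      simp only [Prod.mk.injEq, Units.val_inj] at he
      obtain ⟨rfl, rfl, rfl⟩ := he
      exact hp
end
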